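/- Assume the stated hypotheses on Ω and u. Then the normal derivative of u is bounded from below near the boundary: there exists K > 0 such that u_ν(x,t) = ∇u(x,t)·ν(x) ≥ −K for all x ∈ Ω_{δ₀} and all t ∈ (0, T). -/

import Mathlib

open Set Metric Filter RealInnerProductSpace

noncomputable section

set_option linter.unusedVariables false

/-- A set `Ω ⊆ ℝⁿ` has boundary of class `C²`: near each boundary point, `Ω` is the strict
sublevel set of a `C²` function with nonvanishing gradient (equivalently, after a rigid motion,
the boundary is locally the graph of a `C²` function with `Ω` strictly on one side). -/
def IsC2Boundary {n : ℕ} (Ω : Set (EuclideanSpace ℝ (Fin n))) : Prop :=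
  ∀ x ∈ frontier Ω, ∃ f : EuclideanSpace ℝ (Fin n) → ℝ, ∃ U ∈ nhds x,
    ContDiffOn ℝ 2 f U ∧ (∀ y ∈ U, fderiv ℝ f y ≠ 0) ∧
    U ∩ Ω = U ∩ {y | f y < 0} ∧ U ∩ frontier Ω = U ∩ {y | f y = 0}

theorem aux_second_order {φ φ' : ℝ → ℝ} {c : ℝ} (h1 : ∀ᶠ s in nhds (0:ℝ), HasDerivAt φ (φ' s) s)
    (h2 : HasDerivAt φ' c 0) (hmax : IsLocalMax φ 0) : φ' 0 = 0 ∧ c ≤ 0 := by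
  have h0 : φ' 0 = 0 := hmax.hasDerivAt_eq_zero h1.self_of_nhds
  refine ⟨h0, ?_⟩
  by_contra hc
  push Not at hc
  have hd : deriv φ =ᶠ[nhds 0] φ' := h1.mono fun s hs => hs.deriv
  have h3 : deriv (deriv φ) 0 = c := by rw [hd.deriv_eq]; exact h2.deriv
  have hmin : IsLocalMin φ 0 := isLocalMin_of_deriv_deriv_pos (by rw [h3]; exact hc)
    (by rw [hd.self_of_nhds]; exact h0) h1.self_of_nhds.continuousAt
  have hconst : φ =ᶠ[nhds 0] fun _ => φ 0 := by
    filter_upwards [hmin, hmax] with s a b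
    exact le_antisymm b a
  have h4 : deriv φ =ᶠ[nhds 0] fun _ => (0:ℝ) := by
    have := hconst.deriv
    simpa using this
  have h5 : deriv (deriv φ) 0 = 0 := by rw [h4.deriv_eq]; simp
  linarith

section
variable {E : Type*} [NormedAddCommGroup E] [InnerProductSpace ℝ E] [CompleteSpace E]

theorem aux_grad_curve {U : E → ℝ} {g : E} {γ : ℝ → E} {γ' : E} {s : ℝ}
    (hU : HasGradientAt U g (γ s)) (hγ : HasDerivAt γ γ' s) :
    HasDerivAt (fun r => U (γ r)) ⟪g, γ'⟫ s := by
  have := (hasGradientAt_iff_hasFDerivAt.1 hU).comp_hasDerivAt s hγ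
  simpa using! this

theorem aux_grad_curve2 {G : E → E} {H : E →L[ℝ] E} {γ γ' : ℝ → E} {a : E}
    (hG : HasFDerivAt G H (γ 0)) (hγ : HasDerivAt γ (γ' 0) 0) (hγ' : HasDerivAt γ' a 0) :
    HasDerivAt (fun r => ⟪G (γ r), γ' r⟫) (⟪H (γ' 0), γ' 0⟫ + ⟪G (γ 0), a⟫) 0 := by
  have h1 : HasDerivAt (fun r => G (γ r)) (H (γ' 0)) 0 := hG.comp_hasDerivAt 0 hγ
  have := h1.inner ℝ hγ'
  rw [add_comm]
  exact this

theorem aux_sphere_curve (ω w : E) (hw : ⟪ω, w⟫ = 0) (hω : ω ≠ 0) :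
    ∃ γ γ' : ℝ → E, γ 0 = ω ∧ (∀ s, ‖γ s‖ = ‖ω‖) ∧ (∀ s, HasDerivAt γ (γ' s) s) ∧ γ' 0 = w ∧
      HasDerivAt γ' (-(‖w‖ ^ 2 / ‖ω‖ ^ 2) • ω) 0 := by
  have hn : (0:ℝ) < ‖ω‖ := norm_pos_iff.2 hω
  set k : ℝ := ‖w‖ ^ 2 / ‖ω‖ ^ 2 with hk
  have hk0 : 0 ≤ k := by positivity
  have hkw : ‖w‖ ^ 2 = k * ‖ω‖ ^ 2 := by rw [hk]; field_simp
  have hd : ∀ s : ℝ, 0 < 1 + k * s ^ 2 / 4 := fun s => by positivity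
  have hdd : ∀ s : ℝ, HasDerivAt (fun r : ℝ => 1 + k * r ^ 2 / 4) (k * s / 2) s := by
    intro s
    have := (((hasDerivAt_pow 2 s).const_mul k).div_const 4).const_add 1
    convert! this using 1
    push_cast; ring
  have hdi : ∀ s : ℝ, HasDerivAt (fun r : ℝ => (1 + k * r ^ 2 / 4)⁻¹)
      (-(k * s / 2) / (1 + k * s ^ 2 / 4) ^ 2) s := fun s => (hdd s).inv (hd s).ne'
  have hl : ∀ s : ℝ, HasDerivAt (fun r : ℝ => (2:ℝ) • ω + r • w) w s := by
    intro s
    have := ((hasDerivAt_id s).smul_const w).const_add ((2:ℝ) • ω)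
    simpa using this
  refine ⟨fun s => -ω + (1 + k * s ^ 2 / 4)⁻¹ • ((2:ℝ) • ω + s • w),
    fun s => (1 + k * s ^ 2 / 4)⁻¹ • w + (-(k * s / 2) / (1 + k * s ^ 2 / 4) ^ 2) •
      ((2:ℝ) • ω + s • w), ?_, ?_, ?_, ?_, ?_⟩
  · simp [two_smul]
  · intro s
    have hd' := (hd s).ne'
    have e : -ω + (1 + k * s ^ 2 / 4)⁻¹ • ((2:ℝ) • ω + s • w)
      = (1 + k * s ^ 2 / 4)⁻¹ • ((1 - k * s ^ 2 / 4) • ω + s • w) := by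
      have : -ω = (1 + k * s ^ 2 / 4)⁻¹ • (-(1 + k * s ^ 2 / 4) • ω) := by
        rw [smul_smul]; field_simp; simp
      rw [this, ← smul_add]; congr 1; module
    have e2 : ‖(1 - k * s ^ 2 / 4) • ω + s • w‖ ^ 2 = ((1 + k * s ^ 2 / 4) * ‖ω‖) ^ 2 := by
      rw [norm_add_sq_real, norm_smul, norm_smul, inner_smul_left, inner_smul_right, hw,
        mul_pow, mul_pow, hkw]
      simp
      ring
    have e3 : ‖(1 - k * s ^ 2 / 4) • ω + s • w‖ = (1 + k * s ^ 2 / 4) * ‖ω‖ := by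
      have := hd s
      exact (sq_eq_sq₀ (norm_nonneg _) (by positivity)).1 e2
    simp only
    rw [e, norm_smul, e3, norm_inv, Real.norm_of_nonneg (hd s).le]
    field_simp
  · intro s
    have := ((hdi s).smul (hl s)).const_add (-ω)
    exact this
  · simp
  · have h3 : HasDerivAt (fun s : ℝ => (-(k * s / 2) / (1 + k * s ^ 2 / 4) ^ 2)) (-(k / 2)) 0 := by
      have ha : HasDerivAt (fun s : ℝ => -(k * s / 2)) (-(k / 2)) 0 := by
        have := (((hasDerivAt_id (0:ℝ)).const_mul k).div_const 2).neg
        simpa using! this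
      have hb : HasDerivAt (fun s : ℝ => (1 + k * s ^ 2 / 4) ^ 2) (2 * (1 + k * 0 ^ 2 / 4) ^ 1 * (k * 0 / 2)) 0 := by
        have := (hdd 0).pow 2
        simpa using! this
      have := ha.div hb (by simp)
      simpa using! this
    have h4 := ((hdi 0).smul_const w).add (h3.smul (hl 0))
    convert! h4 using 1
    simp
    module

theorem aux_rot (n m : E) (hn : ‖n‖ = 1) (hm : ‖m‖ = 1) (hnm : ‖n - m‖ ≤ 1) :
    ∃ Q : E →ₗᵢ[ℝ] E, Q m = n ∧ ∀ v, ‖Q v - v‖ ≤ 4 * ‖n - m‖ * ‖v‖ := by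
  set c : ℝ := ⟪m, n⟫ with hc
  have hmm : ⟪m, m⟫ = (1:ℝ) := by rw [real_inner_self_eq_norm_sq, hm]; norm_num
  have hnn : ⟪n, n⟫ = (1:ℝ) := by rw [real_inner_self_eq_norm_sq, hn]; norm_num
  have hd2 : ‖n - m‖ ^ 2 = 2 - 2 * c := by
    rw [norm_sub_sq_real, hn, hm, real_inner_comm, ← hc]; ring
  have hd0 := norm_nonneg (n - m)
  have hc1 : 1 / 2 ≤ c := by nlinarith
  have hc2 : 1 + c ≠ 0 := by linarith
  let L : E →ₗ[ℝ] E :=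
    { toFun := fun v => v - ((⟪m, v⟫ + ⟪n, v⟫) / (1 + c)) • (m + n) + (2 * ⟪m, v⟫) • n
      map_add' := by
        intro x y
        simp only [inner_add_right]
        module
      map_smul' := by
        intro r x
        simp only [inner_smul_right, RingHom.id_apply]
        module }
  have hL : ∀ v, L v = v - ((⟪m, v⟫ + ⟪n, v⟫) / (1 + c)) • (m + n) + (2 * ⟪m, v⟫) • n := fun v => rfl
  refine ⟨⟨L, ?_⟩, ?_, ?_⟩
  · intro v
    rw [← sq_eq_sq₀ (norm_nonneg _) (norm_nonneg _), ← real_inner_self_eq_norm_sq,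
      ← real_inner_self_eq_norm_sq, hL]
    set s : ℝ := (⟪m, v⟫ + ⟪n, v⟫) / (1 + c) with hs
    have hs' : s * (1 + c) = ⟪m, v⟫ + ⟪n, v⟫ := by rw [hs]; field_simp
    simp only [inner_add_left, inner_add_right, inner_sub_left, inner_sub_right,
      real_inner_smul_left, real_inner_smul_right, hmm, hnn, real_inner_comm n m, 
      real_inner_comm v m, real_inner_comm v n]
    have h1 : (⟪n, m⟫ : ℝ) = c := by rw [real_inner_comm]
    try rw [h1]
    set a : ℝ := ⟪m, v⟫
    set b : ℝ := ⟪n, v⟫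
    have hb : b = s * (1 + c) - a := by linarith
    have e1 : (⟪v, m⟫ : ℝ) = a := real_inner_comm _ _
    have e2 : (⟪v, n⟫ : ℝ) = b := real_inner_comm _ _
    try rw [e1]
    try rw [e2]
    rw [hb]
    ring
  · change L m = n
    have h1 : (⟪n, m⟫ : ℝ) = c := by rw [real_inner_comm]
    rw [hL, hmm, h1, div_self hc2]
    module
  · intro v
    change ‖L v - v‖ ≤ _
    rw [hL]
    set s : ℝ := (⟪m, v⟫ + ⟪n, v⟫) / (1 + c) with hs
    have hs' : s * (1 + c) = ⟪m, v⟫ + ⟪n, v⟫ := by rw [hs]; field_simp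
    have e : v - s • (m + n) + (2 * ⟪m, v⟫) • n - v = (2 * ⟪m, v⟫ - 2 * s) • n + s • (n - m) := by
      module
    rw [e]
    set a : ℝ := ⟪m, v⟫ with ha
    set b : ℝ := ⟪n, v⟫ with hb
    have hab : b - a = ⟪n - m, v⟫ := by rw [inner_sub_left]
    have hba : |b - a| ≤ ‖n - m‖ * ‖v‖ := by rw [hab]; exact abs_real_inner_le_norm _ _
    have haa : |a| ≤ ‖v‖ := by have := abs_real_inner_le_norm m v; rwa [hm, one_mul] at this
    have hbb : |b| ≤ ‖v‖ := by have := abs_real_inner_le_norm n v; rwa [hn, one_mul] at this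
    have hv := norm_nonneg v
    have hs1 : |s| ≤ 2 * ‖v‖ := by
      have : |s| * (1 + c) ≤ 2 * ‖v‖ := by
        have h5 : |s| * (1 + c) = |s * (1 + c)| := by
          rw [abs_mul, abs_of_nonneg (by linarith : (0:ℝ) ≤ 1 + c)]
        rw [h5, hs']
        exact (abs_add_le _ _).trans (by linarith)
      have := abs_nonneg s
      nlinarith
    have hs2 : |2 * a - 2 * s| ≤ 2 * (‖n - m‖ * ‖v‖) := by
      have h6 : (2 * a - 2 * s) * (1 + c) = -(a * ‖n - m‖ ^ 2) - 2 * (b - a) := by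
        rw [hd2]; linear_combination (-2) * hs'
      have h7 : |2 * a - 2 * s| * (1 + c) ≤ 3 * (‖n - m‖ * ‖v‖) := by
        have h5 : |2 * a - 2 * s| * (1 + c) = |(2 * a - 2 * s) * (1 + c)| := by
          rw [abs_mul, abs_of_nonneg (by linarith : (0:ℝ) ≤ 1 + c)]
        rw [h5, h6]
        refine (abs_sub _ _).trans ?_
        rw [abs_neg, abs_mul, abs_mul, abs_two, abs_of_nonneg (sq_nonneg ‖n - m‖)]
        have : |a| * ‖n - m‖ ^ 2 ≤ ‖v‖ * ‖n - m‖ := by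
          apply mul_le_mul haa _ (by positivity) hv
          nlinarith
        linarith
      have := abs_nonneg (2 * a - 2 * s)
      nlinarith
    refine (norm_add_le _ _).trans ?_
    rw [norm_smul, norm_smul, hn, Real.norm_eq_abs, Real.norm_eq_abs]
    nlinarith

end

theorem aux_trace {n : ℕ} (H : EuclideanSpace ℝ (Fin n) →L[ℝ] EuclideanSpace ℝ (Fin n))
    (Q : EuclideanSpace ℝ (Fin n) →ₗᵢ[ℝ] EuclideanSpace ℝ (Fin n)) :
    ∑ i : Fin n, ⟪H (Q (EuclideanSpace.single i (1:ℝ))), Q (EuclideanSpace.single i (1:ℝ))⟫ =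
    ∑ i : Fin n, ⟪H (EuclideanSpace.single i (1:ℝ)), EuclideanSpace.single i (1:ℝ)⟫ := by
  have b := EuclideanSpace.basisFun (Fin n) ℝ
  let Q' : EuclideanSpace ℝ (Fin n) ≃ₗᵢ[ℝ] EuclideanSpace ℝ (Fin n) :=
    Q.toLinearIsometryEquiv rfl
  have h1 := LinearMap.trace_eq_sum_inner (H : EuclideanSpace ℝ (Fin n) →ₗ[ℝ] EuclideanSpace ℝ (Fin n)) (EuclideanSpace.basisFun (Fin n) ℝ)
  have h2 := LinearMap.trace_eq_sum_inner (H : EuclideanSpace ℝ (Fin n) →ₗ[ℝ] EuclideanSpace ℝ (Fin n)) ((EuclideanSpace.basisFun (Fin n) ℝ).map Q')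
  rw [h1] at h2
  simp only [OrthonormalBasis.map_apply, EuclideanSpace.basisFun_apply] at h2
  simp only [real_inner_comm] at h2 ⊢
  exact h2.symm

theorem aux_curve {E : Type*} [NormedAddCommGroup E] [InnerProductSpace ℝ E] [CompleteSpace E]
    (X : E → E) (hX : ContDiff ℝ 2 X) (Ω : Set E) (hΩ : IsOpen Ω)
    (U : E → ℝ) (G : E → E) (H : E → (E →L[ℝ] E))
    (hG : ∀ x ∈ Ω, HasGradientAt U (G x) x) (hH : ∀ x ∈ Ω, HasFDerivAt G (H x) x)
    (x ω : E) (h a : ℝ) (hω : ω ≠ 0) (hx : x ∈ Ω) (hy : x - h • X x + h • ω ∈ Ω)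
    (V : Set E) (hV : V ∈ nhds x)
    (hmax : ∀ x' ∈ V, ∀ ω', ‖ω'‖ = ‖ω‖ → x' - h • X x' + h • ω' ∈ Ω →
      U (x' - h • X x' + h • ω') - a * U x' ≤ U (x - h • X x + h • ω) - a * U x)
    (v w : E) (hw : ⟪ω, w⟫ = 0) :
    ⟪G (x - h • X x + h • ω), v - h • (fderiv ℝ X x v) + h • w⟫ - a * ⟪G x, v⟫ = 0 ∧
    ⟪H (x - h • X x + h • ω) (v - h • (fderiv ℝ X x v) + h • w),
      v - h • (fderiv ℝ X x v) + h • w⟫ +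
    ⟪G (x - h • X x + h • ω), -(h • (fderiv ℝ (fderiv ℝ X) x v v)) +
      h • (-(‖w‖ ^ 2 / ‖ω‖ ^ 2) • ω)⟫ - a * ⟪H x v, v⟫ ≤ 0 := by
  obtain ⟨γ, γ', g0, gn, gd, g'0, gdd⟩ := aux_sphere_curve ω w hw hω
  have hl : ∀ s : ℝ, HasDerivAt (fun s : ℝ => x + s • v) v s := by
    intro s
    have := ((hasDerivAt_id s).smul_const v).const_add x
    simpa using! this
  have hXd : ∀ s : ℝ, HasDerivAt (fun s : ℝ => X (x + s • v)) (fderiv ℝ X (x + s • v) v) s := by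
    intro s
    exact ((hX.differentiable (by norm_num) _).hasFDerivAt).comp_hasDerivAt s (hl s)
  have hX1 : ContDiff ℝ 1 (fderiv ℝ X) := hX.fderiv_right (by norm_num)
  have hXdd : HasDerivAt (fun s : ℝ => fderiv ℝ X (x + s • v) v)
      (fderiv ℝ (fderiv ℝ X) x v v) 0 := by
    have h1 : HasDerivAt (fun s : ℝ => fderiv ℝ X (x + s • v)) (fderiv ℝ (fderiv ℝ X) x v) 0 := by
      have h0 : HasFDerivAt (fderiv ℝ X) (fderiv ℝ (fderiv ℝ X) x) (x + (0:ℝ) • v) := by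
        simpa using (hX1.differentiable (by norm_num) x).hasFDerivAt
      exact h0.comp_hasDerivAt 0 (hl 0)
    have := h1.clm_apply (hasDerivAt_const (0:ℝ) v)
    simpa using! this
  set Y : ℝ → E := fun s => x + s • v - h • X (x + s • v) + h • γ s with hY
  set Y' : ℝ → E := fun s => v - h • (fderiv ℝ X (x + s • v) v) + h • γ' s with hY'
  have hYd : ∀ s, HasDerivAt Y (Y' s) s := fun s =>
    ((hl s).sub ((hXd s).const_smul h)).add ((gd s).const_smul h)
  have hYdd : HasDerivAt Y' (-(h • (fderiv ℝ (fderiv ℝ X) x v v)) +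
      h • (-(‖w‖ ^ 2 / ‖ω‖ ^ 2) • ω)) 0 :=
    ((hXdd.const_smul h).const_sub v).add (gdd.const_smul h)
  have hY0 : Y 0 = x - h • X x + h • ω := by simp [hY, g0]
  have hY'0 : Y' 0 = v - h • (fderiv ℝ X x v) + h • w := by simp [hY', g'0]
  have hYc : ContinuousAt Y 0 := (hYd 0).continuousAt
  have hxc : ContinuousAt (fun s : ℝ => x + s • v) 0 := (hl 0).continuousAt
  have eY : ∀ᶠ s in nhds (0:ℝ), Y s ∈ Ω :=
    hYc.eventually_mem (by rw [hY0]; exact hΩ.mem_nhds hy)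
  have ex : ∀ᶠ s in nhds (0:ℝ), x + s • v ∈ Ω :=
    hxc.eventually_mem (by simpa using hΩ.mem_nhds hx)
  have eV : ∀ᶠ s in nhds (0:ℝ), x + s • v ∈ V :=
    hxc.eventually_mem (by simpa using hV)
  have key := aux_second_order (φ := fun s => U (Y s) - a * U (x + s • v))
    (φ' := fun s => ⟪G (Y s), Y' s⟫ - a * ⟪G (x + s • v), v⟫)
    (c := (⟪H (Y 0) (Y' 0), Y' 0⟫ + ⟪G (Y 0), -(h • (fderiv ℝ (fderiv ℝ X) x v v)) +
      h • (-(‖w‖ ^ 2 / ‖ω‖ ^ 2) • ω)⟫) - a * (⟪H x v, v⟫ + ⟪G x, (0:E)⟫)) ?_ ?_ ?_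
  · simp only [hY0, hY'0, zero_smul, add_zero, inner_zero_right] at key
    exact key
  · filter_upwards [eY, ex] with s h1 h2
    exact (aux_grad_curve (hG _ h1) (hYd s)).sub ((aux_grad_curve (hG _ h2) (hl s)).const_mul a)
  · refine (aux_grad_curve2 (hH _ (by rw [hY0]; exact hy)) (hYd 0) hYdd).sub
      (HasDerivAt.const_mul a ?_)
    have := aux_grad_curve2 (G := G) (H := H x) (γ := fun s : ℝ => x + s • v) (γ' := fun _ => v)
      (a := 0) (by simpa using hH x hx) (hl 0) (hasDerivAt_const _ _)
    simpa using this
  · filter_upwards [eY, eV] with s h1 h2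
    have := hmax _ h2 (γ s) (gn s) h1
    simp only [hY0]
    simpa using! this

theorem aux_core {n : ℕ}
    (X : EuclideanSpace ℝ (Fin n) → EuclideanSpace ℝ (Fin n)) (hX : ContDiff ℝ 2 X)
    (Ω : Set (EuclideanSpace ℝ (Fin n))) (hΩ : IsOpen Ω)
    (U : EuclideanSpace ℝ (Fin n) → ℝ) (G : EuclideanSpace ℝ (Fin n) → EuclideanSpace ℝ (Fin n))
    (H : EuclideanSpace ℝ (Fin n) → (EuclideanSpace ℝ (Fin n) →L[ℝ] EuclideanSpace ℝ (Fin n)))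
    (hG : ∀ x ∈ Ω, HasGradientAt U (G x) x) (hH : ∀ x ∈ Ω, HasFDerivAt G (H x) x)
    (x ω : EuclideanSpace ℝ (Fin n)) (h a D1 D2 : ℝ) (hh : 0 < h) (ha : 0 < a)
    (hhD : h * D1 ≤ 1 / 4)
    (hD1 : ‖fderiv ℝ X x‖ ≤ D1) (hD2 : ‖fderiv ℝ (fderiv ℝ X) x‖ ≤ D2)
    (hω : ‖ω‖ = 1 / 2) (hx : x ∈ Ω) (y : EuclideanSpace ℝ (Fin n)) (hyd : y = x - h • X x + h • ω)
    (hy : y ∈ Ω)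
    (V : Set (EuclideanSpace ℝ (Fin n))) (hV : V ∈ nhds x)
    (hmax : ∀ x' ∈ V, ∀ ω', ‖ω'‖ = 1 / 2 → x' - h • X x' + h • ω' ∈ Ω →
      U (x' - h • X x' + h • ω') - a * U x' ≤ U y - a * U x) :
    ∃ κ : ℝ, |κ - 1| ≤ h * D1 ∧ a * ‖G x‖ = κ * ‖G y‖ ∧
      κ ^ 2 * (∑ i : Fin n, ⟪H y (EuclideanSpace.single i (1:ℝ)), EuclideanSpace.single i (1:ℝ)⟫)
      - a * (∑ i : Fin n, ⟪H x (EuclideanSpace.single i (1:ℝ)), EuclideanSpace.single i (1:ℝ)⟫)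
      ≤ h * ‖G y‖ * (n * (D2 + 200 * D1 ^ 2)) := by
  have hω0 : ω ≠ 0 := by rintro rfl; norm_num at hω
  have main := aux_curve X hX Ω hΩ U G H hG hH x ω h a hω0 hx (hyd ▸ hy) V hV
    (by rw [hω, ← hyd]; exact hmax)
  rw [← hyd, hω] at main
  set D := fderiv ℝ X x with hD
  have hD10 : 0 ≤ D1 := (norm_nonneg _).trans hD1
  set e : EuclideanSpace ℝ (Fin n) := (2:ℝ) • ω with he
  have hen : ‖e‖ = 1 := by rw [he, norm_smul, hω]; norm_num
  have hωe : ω = (1/2:ℝ) • e := by rw [he, smul_smul]; norm_num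
  have hee : ⟪e, e⟫ = (1:ℝ) := by rw [real_inner_self_eq_norm_sq, hen]; norm_num
  clear_value e
  set l : ℝ := ⟪G y, e⟫ with hl
  have hGy : G y = l • e := by
    have h1 : ⟪ω, G y - l • e⟫ = (0:ℝ) := by
      rw [hωe, inner_smul_left, inner_sub_right, inner_smul_right, hee, real_inner_comm, ← hl]
      simp
    have h2 := (main 0 (G y - l • e) h1).1
    simp only [map_zero, smul_zero, sub_zero, zero_add, inner_zero_right, mul_zero,
      inner_smul_right] at h2
    have h3 : ⟪G y, G y - l • e⟫ = (0:ℝ) := by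
      rcases mul_eq_zero.1 h2 with h4 | h4
      · exact absurd h4 hh.ne'
      · exact h4
    have h5 : ⟪G y - l • e, G y - l • e⟫ = (0:ℝ) := by
      rw [inner_sub_left, h3, inner_smul_left]
      have : ⟪e, G y - l • e⟫ = (0:ℝ) := by
        have h1' := h1
        rw [hωe, inner_smul_left] at h1'
        simpa using h1'
      rw [this]; simp
    exact sub_eq_zero.1 (inner_self_eq_zero.1 h5)
  have hlq : |l| = ‖G y‖ := by rw [hGy, norm_smul, hen, mul_one, Real.norm_eq_abs]
  set A := ContinuousLinearMap.adjoint D with hA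
  set m : EuclideanSpace ℝ (Fin n) := e - h • A e with hm
  have hAe : ‖A e‖ ≤ D1 := by
    have := A.le_opNorm e
    rw [hen, mul_one, hA, LinearIsometryEquiv.norm_map] at this
    exact this.trans hD1
  have hmv : ∀ v, ⟪m, v⟫ = ⟪e, v - h • D v⟫ := by
    intro v
    rw [hm, inner_sub_left, inner_sub_right, inner_smul_left, inner_smul_right, hA,
      ContinuousLinearMap.adjoint_inner_left]
    simp
  have hGx : a • G x = l • m := by
    refine ext_inner_right ℝ fun v => ?_
    have h1 := (main v 0 (by simp)).1
    rw [smul_zero, add_zero, hGy, inner_smul_left] at h1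
    rw [inner_smul_left, inner_smul_left, hmv]
    simp only [conj_trivial] at h1 ⊢
    linarith
  set κ := ‖m‖ with hκ
  have hκ1 : |κ - 1| ≤ h * D1 := by
    rw [← hen, hκ]
    refine (abs_norm_sub_norm_le _ _).trans ?_
    rw [hm, sub_sub_cancel_left, norm_neg, norm_smul, Real.norm_of_nonneg hh.le]
    gcongr
  have hκb := abs_le.1 hκ1
  have hκ0 : 0 < κ := by linarith
  refine ⟨κ, hκ1, ?_, ?_⟩
  · have := congrArg norm hGx
    rw [norm_smul, norm_smul, Real.norm_of_nonneg ha.le, Real.norm_eq_abs, hlq] at this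
    rw [this, mul_comm]
  set mh : EuclideanSpace ℝ (Fin n) := κ⁻¹ • m with hmh
  have hmhn : ‖mh‖ = 1 := by
    rw [hmh, norm_smul, norm_inv, Real.norm_of_nonneg hκ0.le, ← hκ]; field_simp
  have hmmh : m = κ • mh := by rw [hmh, smul_smul, mul_inv_cancel₀ hκ0.ne', one_smul]
  clear_value mh
  have hd : κ * ‖e - mh‖ ≤ 2 * (h * D1) := by
    have : κ * ‖e - mh‖ = ‖(κ - 1) • e + h • A e‖ := by
      rw [← Real.norm_of_nonneg hκ0.le, ← norm_smul, Real.norm_of_nonneg hκ0.le, smul_sub, ← hmmh, hm]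
      congr 1; module
    rw [this]
    refine (norm_add_le _ _).trans ?_
    rw [norm_smul, norm_smul, hen, Real.norm_eq_abs, Real.norm_of_nonneg hh.le]
    have : h * ‖A e‖ ≤ h * D1 := by gcongr
    linarith
  have hd1 : ‖e - mh‖ ≤ 1 := by
    have := norm_nonneg (e - mh)
    nlinarith
  obtain ⟨Q, hQm, hQ⟩ := aux_rot e mh hen hmhn hd1
  have each : ∀ i : Fin n, κ ^ 2 * ⟪H y (Q (EuclideanSpace.single i (1:ℝ))),
      Q (EuclideanSpace.single i (1:ℝ))⟫ -
      a * ⟪H x (EuclideanSpace.single i (1:ℝ)), EuclideanSpace.single i (1:ℝ)⟫ ≤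
      h * ‖G y‖ * (D2 + 200 * D1 ^ 2) := by
    intro i
    set v : EuclideanSpace ℝ (Fin n) := EuclideanSpace.single i (1:ℝ) with hv
    have hvn : ‖v‖ = 1 := by simp [hv]
    set w : EuclideanSpace ℝ (Fin n) := h⁻¹ • (κ • Q v - v + h • D v) with hw
    have hhw : h • w = κ • Q v - v + h • D v := by
      rw [hw, smul_smul, mul_inv_cancel₀ hh.ne', one_smul]
    have hr : v - h • D v + h • w = κ • Q v := by rw [hhw]; module
    have hωw : ⟪ω, w⟫ = (0:ℝ) := by
      have h1 : ⟪e, κ • Q v - v + h • D v⟫ = (0:ℝ) := by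
        have h2 : ⟪e, κ • Q v⟫ = ⟪m, v⟫ := by
          rw [inner_smul_right, ← hQm, Q.inner_map_map, hmmh, inner_smul_left]; simp
        have h3 := hmv v
        rw [inner_sub_right] at h3
        rw [inner_add_right, inner_sub_right, h2, h3]; ring
      rw [hωe, hw, inner_smul_left, inner_smul_right, h1]; simp
    have h2 := (main v w hωw).2
    rw [hr] at h2
    have hwn : ‖w‖ ≤ 10 * D1 := by
      have h3 : h * ‖w‖ ≤ h * (10 * D1) := by
        have : h * ‖w‖ = ‖κ • (Q v - v) + (κ - 1) • v + h • D v‖ := by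
          rw [← Real.norm_of_nonneg hh.le, ← norm_smul, Real.norm_of_nonneg hh.le, hhw]
          congr 1; module
        rw [this]
        refine (norm_add₃_le).trans ?_
        rw [norm_smul, norm_smul, norm_smul, hvn, Real.norm_eq_abs (κ - 1),
          Real.norm_of_nonneg hh.le, Real.norm_of_nonneg hκ0.le]
        have h4 := hQ v
        rw [hvn, mul_one] at h4
        have h5 : ‖D v‖ ≤ D1 := by
          have := D.le_opNorm v
          rw [hvn, mul_one] at this
          exact this.trans hD1
        have h6 : h * ‖D v‖ ≤ h * D1 := by gcongr
        have h7 : κ * ‖Q v - v‖ ≤ κ * (4 * ‖e - mh‖) := by gcongr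
        linarith
      exact le_of_mul_le_mul_left h3 hh
    have hDD : ‖fderiv ℝ (fderiv ℝ X) x v v‖ ≤ D2 := by
      have h3 := (fderiv ℝ (fderiv ℝ X) x v).le_opNorm v
      have h4 := (fderiv ℝ (fderiv ℝ X) x).le_opNorm v
      rw [hvn, mul_one] at h3 h4
      exact h3.trans (h4.trans hD2)
    set B : EuclideanSpace ℝ (Fin n) := -(h • (fderiv ℝ (fderiv ℝ X) x v v)) +
      h • (-(‖w‖ ^ 2 / (1 / 2) ^ 2) • ω) with hB
    have hBn : ‖B‖ ≤ h * (D2 + 200 * D1 ^ 2) := by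
      have : B = h • (-(fderiv ℝ (fderiv ℝ X) x v v) + (-(‖w‖ ^ 2 / (1 / 2) ^ 2) • ω)) := by
        rw [hB]; module
      rw [this, norm_smul, Real.norm_of_nonneg hh.le]
      gcongr
      refine (norm_add_le _ _).trans ?_
      rw [norm_neg, norm_smul, norm_neg, hω, Real.norm_of_nonneg (by positivity)]
      have := norm_nonneg w
      have : ‖w‖ ^ 2 ≤ (10 * D1) ^ 2 := by gcongr
      have e4 : ‖w‖ ^ 2 / (1 / 2) ^ 2 * (1 / 2) = 2 * ‖w‖ ^ 2 := by ring
      rw [e4]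
      nlinarith
    have hin : -(‖G y‖ * (h * (D2 + 200 * D1 ^ 2))) ≤ ⟪G y, B⟫ := by
      have h3 := (abs_le.1 (abs_real_inner_le_norm (G y) B)).1
      have h4 : ‖G y‖ * ‖B‖ ≤ ‖G y‖ * (h * (D2 + 200 * D1 ^ 2)) := by gcongr
      linarith
    have h8 : ⟪H y (κ • Q v), κ • Q v⟫ = κ ^ 2 * ⟪H y (Q v), Q v⟫ := by
      rw [map_smul, inner_smul_left, inner_smul_right]; simp; ring
    rw [h8] at h2
    linarith
  have hsum := Finset.sum_le_sum (fun i (_ : i ∈ Finset.univ) => each i)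
  rw [Finset.sum_sub_distrib, ← Finset.mul_sum, ← Finset.mul_sum, aux_trace (H y) Q] at hsum
  refine hsum.trans (le_of_eq ?_)
  simp
  ring

theorem aux_algebra (p h B A M D1 C q κ gx Uy Ux Ly Lx : ℝ) (hp : 2 < p) (hh : 0 < h) (hC : 0 ≤ C)
    (hD1 : 0 ≤ D1) (hM : 0 ≤ M) (hB : B = 2 * p * D1 + 3 * D1 + C) (hA : A = 3 * D1 * M + C + 1)
    (hhD : h * D1 ≤ 1 / 4) (hhB : h * B ≤ 1 / 2) (hq : 0 ≤ q) (hκ : |κ - 1| ≤ h * D1)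
    (hgx : (1 - h * B) * gx = κ * q) (hUy : |Uy| ≤ M)
    (hLy : Uy - Ly = q ^ p) (hLx : Ux - Lx = gx ^ p)
    (htime : h * A ≤ Uy - (1 - h * B) * Ux)
    (hspace : κ ^ 2 * Ly - (1 - h * B) * Lx ≤ h * q * C) : False := by
  have hκb := abs_le.1 hκ
  have hB0 : 0 ≤ B := by rw [hB]; nlinarith
  have hhB0 : 0 ≤ h * B := by positivity
  have hhD0 : 0 ≤ h * D1 := by positivity
  set a := 1 - h * B with ha
  have ha0 : 0 < a := by linarith
  have hκ0 : 0 < κ := by linarith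
  have hgx' : gx = a⁻¹ * κ * q := by field_simp; linarith
  have hqp : 0 ≤ q ^ p := Real.rpow_nonneg hq p
  have e1 : gx ^ p = (a⁻¹) ^ p * κ ^ p * q ^ p := by
    rw [hgx', Real.mul_rpow (by positivity) hq, Real.mul_rpow (by positivity) hκ0.le]
  have hainv : 1 + h * B ≤ a⁻¹ := by
    rw [le_inv_comm₀ (by linarith) ha0, inv_eq_one_div, le_div_iff₀ (by linarith)]
    nlinarith
  have e2 : 1 + h * B ≤ a * (a⁻¹) ^ p := by
    have h1 : a * (a⁻¹) ^ p = (a⁻¹) ^ (p - 1) := by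
      rw [Real.rpow_sub_one (by positivity)]
      field_simp
    rw [h1]
    refine hainv.trans ?_
    have := Real.rpow_le_rpow_of_exponent_le (by linarith : 1 ≤ a⁻¹) (by linarith : (1:ℝ) ≤ p - 1)
    simpa using this
  have e3 : 1 - p * (h * D1) ≤ κ ^ p := by
    have h1 := one_add_mul_self_le_rpow_one_add (s := κ - 1) (by linarith) (by linarith : 1 ≤ p)
    rw [add_sub_cancel] at h1
    nlinarith
  have hκp : 0 ≤ κ ^ p := Real.rpow_nonneg hκ0.le p
  have e4 : 1 + h * B - 2 * (p * (h * D1)) ≤ a * (a⁻¹) ^ p * κ ^ p := by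
    have h1 : (1 + h * B) * κ ^ p ≤ a * (a⁻¹) ^ p * κ ^ p := by gcongr
    have h2 : (1 + h * B) * (1 - p * (h * D1)) ≤ (1 + h * B) * κ ^ p := by gcongr
    have h3 : 0 ≤ p * (h * D1) := by positivity
    nlinarith
  have e5' : |κ ^ 2 - 1| ≤ 3 * (h * D1) := by
    have h1 : κ ^ 2 - 1 = (κ - 1) * (κ + 1) := by ring
    rw [h1, abs_mul, mul_comm]
    have h2 : |κ + 1| ≤ 3 := by rw [abs_le]; constructor <;> linarith
    gcongr
  have e5 : κ ^ 2 - 1 ≤ 3 * (h * D1) := (abs_le.1 e5').2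
  have e6 : -(3 * (h * D1) * M) ≤ (κ ^ 2 - 1) * Uy := by
    have : |(κ ^ 2 - 1) * Uy| ≤ 3 * (h * D1) * M := by
      rw [abs_mul]; gcongr
    exact (abs_le.1 this).1
  have e7 : h * C * q ^ p ≤ (a * (a⁻¹) ^ p * κ ^ p - κ ^ 2) * q ^ p := by
    gcongr
    rw [hB] at e4
    linarith
  have e8 : q ≤ 1 + q ^ p := by
    rcases le_total q 1 with h1 | h1
    · linarith
    · have := Real.rpow_le_rpow_of_exponent_le h1 (by linarith : (1:ℝ) ≤ p)
      rw [Real.rpow_one] at this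
      linarith
  have e9 : h * C * q ≤ h * C * (1 + q ^ p) := by gcongr
  have e10 : κ ^ 2 * Ly - a * Lx = (Uy - a * Ux) + (κ ^ 2 - 1) * Uy +
      (a * (a⁻¹) ^ p * κ ^ p - κ ^ 2) * q ^ p := by
    have : Lx = Ux - (a⁻¹) ^ p * κ ^ p * q ^ p := by rw [← e1]; linarith
    rw [this]
    have : Ly = Uy - q ^ p := by linarith
    rw [this]; ring
  rw [hA] at htime
  have e11 : h * (3 * D1 * M + C + 1) = 3 * (h * D1) * M + h * C + h := by ring
  have e12 : h * C * (1 + q ^ p) = h * C + h * C * q ^ p := by ring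
  have e13 : h * q * C = h * C * q := by ring
  linarith

theorem aux_ext_local {n : ℕ} (Ω : Set (EuclideanSpace ℝ (Fin n))) (hc : IsC2Boundary Ω)
    (b₀ : EuclideanSpace ℝ (Fin n)) (hb₀ : b₀ ∈ frontier Ω) :
    ∃ r > 0, ∃ N ∈ nhds b₀, ∀ b ∈ frontier Ω, b ∈ N → ∃ e : EuclideanSpace ℝ (Fin n), ‖e‖ = 1 ∧
      ∀ y ∈ Ω, 2 * r * ⟪y - b, e⟫ ≤ ‖y - b‖ ^ 2 := by
  obtain ⟨f, U, hU, hf, hne, hΩ, hF⟩ := hc b₀ hb₀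
  have hfa : ContDiffAt ℝ 2 f b₀ := hf.contDiffAt hU
  have hf1 : ContDiffAt ℝ 1 (fderiv ℝ f) b₀ := hfa.fderiv_right (by norm_num)
  obtain ⟨K, V, hV, hK⟩ := hf1.exists_lipschitzOnWith
  set c : ℝ := ‖fderiv ℝ f b₀‖ / 2 with hcd
  have hc0 : 0 < c := by
    have := norm_pos_iff.2 (hne b₀ (mem_of_mem_nhds hU))
    positivity
  have hW : ∀ᶠ y in nhds b₀, c < ‖fderiv ℝ f y‖ := by
    apply hf1.continuousAt.norm.eventually (lt_mem_nhds ?_)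
    linarith
  have hdiff : ∀ᶠ y in nhds b₀, DifferentiableAt ℝ f y := by
    have := hfa.eventually (by simp)
    filter_upwards [this] with y hy
    exact hy.differentiableAt (by norm_num)
  obtain ⟨ρ, hρ, hball⟩ := Metric.eventually_nhds_iff_ball.1
    ((eventually_mem_set.2 hU).and ((eventually_mem_set.2 hV).and (hW.and hdiff)))
  refine ⟨min (ρ / 4) (c / (2 * (K + 1))), by positivity, ball b₀ (ρ / 2),
    ball_mem_nhds _ (by positivity), ?_⟩
  intro b hb hbN
  set r := min (ρ / 4) (c / (2 * (K + 1))) with hr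
  have hr0 : 0 < r := by positivity
  have hr1 : r ≤ ρ / 4 := min_le_left _ _
  have hr2 : 2 * r * (K + 1) ≤ c := by
    have : r ≤ c / (2 * (K + 1)) := min_le_right _ _
    rw [le_div_iff₀ (by positivity)] at this
    linarith
  have hbb : b ∈ ball b₀ ρ := ball_subset_ball (by linarith) hbN
  obtain ⟨hbU, hbV, hbW, hbd⟩ := hball b hbb
  have hfb : f b = 0 := by
    have : b ∈ U ∩ frontier Ω := ⟨hbU, hb⟩
    rw [hF] at this
    exact this.2
  set g := (InnerProductSpace.toDual ℝ (EuclideanSpace ℝ (Fin n))).symm (fderiv ℝ f b) with hg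
  have hgn : ‖g‖ = ‖fderiv ℝ f b‖ := by rw [hg, LinearIsometryEquiv.norm_map]
  have hgv : ∀ v, ⟪g, v⟫ = fderiv ℝ f b v := fun v => by
    rw [hg, InnerProductSpace.toDual_symm_apply]
  have hg0 : 0 < ‖g‖ := by rw [hgn]; linarith
  refine ⟨‖g‖⁻¹ • g, ?_, ?_⟩
  · rw [norm_smul, norm_inv, norm_norm]; field_simp
  intro y hy
  have hin : ⟪y - b, ‖g‖⁻¹ • g⟫ = ‖g‖⁻¹ * fderiv ℝ f b (y - b) := by
    rw [inner_smul_right, real_inner_comm, hgv]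
  rw [hin]
  rcases le_or_gt (ρ / 2) ‖y - b‖ with h1 | h1
  · have h2 : ‖g‖⁻¹ * fderiv ℝ f b (y - b) ≤ ‖y - b‖ := by
      have := (le_abs_self _).trans ((fderiv ℝ f b).le_opNorm (y - b))
      rw [← hgn] at this
      rw [inv_mul_le_iff₀ hg0]; exact this
    have h3 : 2 * r * (‖g‖⁻¹ * fderiv ℝ f b (y - b)) ≤ 2 * r * ‖y - b‖ := by gcongr
    nlinarith [norm_nonneg (y - b)]
  · have hs : closedBall b ‖y - b‖ ⊆ ball b₀ ρ := by
      intro z hz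
      rw [mem_closedBall] at hz
      rw [mem_ball] at hbN ⊢
      have := dist_triangle z b b₀
      linarith
    have hyb : y ∈ closedBall b ‖y - b‖ := by rw [mem_closedBall, dist_eq_norm]
    have hbb' : b ∈ closedBall b ‖y - b‖ := mem_closedBall_self (norm_nonneg _)
    have hyU := hball y (hs hyb)
    have hfy : f y < 0 := by
      have : y ∈ U ∩ Ω := ⟨hyU.1, hy⟩
      rw [hΩ] at this
      exact this.2
    have hmv := Convex.norm_image_sub_le_of_norm_fderiv_le' (𝕜 := ℝ) (f := f)
      (φ := fderiv ℝ f b) (C := K * ‖y - b‖) (s := closedBall b ‖y - b‖)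
      (fun z hz => (hball z (hs hz)).2.2.2) (fun z hz => by
        have := hK.dist_le_mul z (hball z (hs hz)).2.1 b hbV
        rw [dist_eq_norm] at this
        rw [mem_closedBall] at hz
        exact this.trans (by gcongr)) (convex_closedBall _ _) hbb' hyb
    rw [hfb, sub_zero, Real.norm_eq_abs] at hmv
    have h4 : fderiv ℝ f b (y - b) ≤ K * ‖y - b‖ ^ 2 := by
      have := (abs_le.1 hmv).1
      nlinarith
    have h5 : ‖g‖⁻¹ * fderiv ℝ f b (y - b) ≤ c⁻¹ * (K * ‖y - b‖ ^ 2) := by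
      have h6 : ‖g‖⁻¹ * fderiv ℝ f b (y - b) ≤ ‖g‖⁻¹ * (K * ‖y - b‖ ^ 2) := by gcongr
      refine h6.trans ?_
      have : ‖g‖⁻¹ ≤ c⁻¹ := inv_anti₀ hc0 (by rw [hgn]; exact hbW.le)
      gcongr
    have h7 : 2 * r * (‖g‖⁻¹ * fderiv ℝ f b (y - b)) ≤ 2 * r * (c⁻¹ * (K * ‖y - b‖ ^ 2)) := by
      gcongr
    refine h7.trans ?_
    have h8 : 2 * r * (c⁻¹ * (K * ‖y - b‖ ^ 2)) = c⁻¹ * (2 * r * K) * ‖y - b‖ ^ 2 := by ring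
    rw [h8]
    have h9 : c⁻¹ * (2 * r * K) ≤ 1 := by
      rw [inv_mul_le_iff₀ hc0]; nlinarith
    have := mul_le_mul_of_nonneg_right h9 (sq_nonneg ‖y - b‖)
    linarith

theorem aux_ext {n : ℕ} (Ω : Set (EuclideanSpace ℝ (Fin n))) (hb : Bornology.IsBounded Ω)
    (hc : IsC2Boundary Ω) :
    ∃ r > 0, ∀ b ∈ frontier Ω, ∃ e : EuclideanSpace ℝ (Fin n), ‖e‖ = 1 ∧
      ∀ y ∈ Ω, 2 * r * ⟪y - b, e⟫ ≤ ‖y - b‖ ^ 2 := by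
  have hcomp : IsCompact (frontier Ω) :=
    Metric.isCompact_of_isClosed_isBounded isClosed_frontier
      (hb.closure.subset frontier_subset_closure)
  have hmono : ∀ (r r' : ℝ), 0 < r' → r' ≤ r → ∀ (y b e : EuclideanSpace ℝ (Fin n)),
      2 * r * ⟪y - b, e⟫ ≤ ‖y - b‖ ^ 2 → 2 * r' * ⟪y - b, e⟫ ≤ ‖y - b‖ ^ 2 := by
    intro r r' h0 h1 y b e h2
    rcases le_total ⟪y - b, e⟫ (0:ℝ) with h3 | h3
    · nlinarith [sq_nonneg ‖y - b‖]
    · nlinarith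
  have := hcomp.induction_on (p := fun s => ∃ r > 0, ∀ b ∈ frontier Ω, b ∈ s →
    ∃ e : EuclideanSpace ℝ (Fin n), ‖e‖ = 1 ∧ ∀ y ∈ Ω, 2 * r * ⟪y - b, e⟫ ≤ ‖y - b‖ ^ 2)
    ⟨1, one_pos, fun b _ h => absurd h (Set.notMem_empty b)⟩
    (fun s t hst ⟨r, hr, h⟩ => ⟨r, hr, fun b hb hbs => h b hb (hst hbs)⟩)
    (fun s t ⟨r, hr, h⟩ ⟨r', hr', h'⟩ => ⟨min r r', lt_min hr hr', fun b hb hbs => by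
      rcases hbs with hbs | hbs
      · obtain ⟨e, he, h1⟩ := h b hb hbs
        exact ⟨e, he, fun y hy => hmono r _ (lt_min hr hr') (min_le_left _ _) _ _ _ (h1 y hy)⟩
      · obtain ⟨e, he, h1⟩ := h' b hb hbs
        exact ⟨e, he, fun y hy => hmono r' _ (lt_min hr hr') (min_le_right _ _) _ _ _ (h1 y hy)⟩⟩)
    (fun b₀ hb₀ => by
      obtain ⟨r, hr, N, hN, h⟩ := aux_ext_local Ω hc b₀ hb₀
      exact ⟨N, nhdsWithin_le_nhds hN, r, hr, h⟩)
  obtain ⟨r, hr, h⟩ := this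
  exact ⟨r, hr, fun b hb => h b hb hb⟩

theorem aux_ball_subset {E : Type*} [NormedAddCommGroup E] [NormedSpace ℝ E] {Ω : Set E} {z : E} {s : ℝ}
    (hs : 0 < s) (hz : z ∈ Ω) (hd : s ≤ infDist z (frontier Ω)) : ball z s ⊆ Ω := by
  intro w hw
  by_contra hwΩ
  have hpre : IsPreconnected (ball z s) := (convex_ball z s).isPreconnected
  have hno : ∀ q ∈ ball z s, q ∉ frontier Ω := by
    intro q hq1 hq2
    have := infDist_le_dist_of_mem (x := z) hq2
    rw [mem_ball, dist_comm] at hq1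
    linarith
  have hzi : z ∈ interior Ω := by
    by_contra hzi
    exact hno z (mem_ball_self hs) ⟨subset_closure hz, hzi⟩
  have hsub := hpre.subset_left_of_subset_union isOpen_interior isClosed_closure.isOpen_compl
    (Set.disjoint_left.2 fun q h1 h2 => h2 (subset_closure (interior_subset h1)))
    (fun q hq => by
      by_cases h1 : q ∈ interior Ω
      · exact Or.inl h1
      · exact Or.inr fun h2 => hno q hq ⟨h2, h1⟩) ⟨z, mem_ball_self hs, hzi⟩
  exact hwΩ (interior_subset (hsub hw))

theorem aux_nu_ext {E : Type*} [NormedAddCommGroup E] [InnerProductSpace ℝ E]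
    (Ω : Set E) (b ν e : E) (r δ₀ : ℝ) (hr : 0 < r) (hδ₀ : 0 < δ₀) (hν : ‖ν‖ = 1) (he : ‖e‖ = 1)
    (hint : ∀ s ∈ Ioo 0 δ₀, ball (b + s • ν) s ⊆ Ω)
    (hext : ∀ y ∈ Ω, 2 * r * ⟪y - b, e⟫ ≤ ‖y - b‖ ^ 2) : e = -ν := by
  have h1 : ∀ τ ∈ Ioo (0:ℝ) 1, ⟪ν, e⟫ + τ ≤ (0:ℝ) := by
    intro τ hτ
    by_contra hc
    push Not at hc
    set q : ℝ := ⟪ν, e⟫ + τ with hq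
    set s : ℝ := min (δ₀ / 2) (r * q / 4) with hs
    have hs0 : 0 < s := by positivity
    have hs1 : s < δ₀ := lt_of_le_of_lt (min_le_left _ _) (by linarith)
    have hs2 : s ≤ r * q / 4 := min_le_right _ _
    have hmem : b + s • ν + (s * τ) • e ∈ Ω := by
      apply hint s ⟨hs0, hs1⟩
      rw [mem_ball, dist_eq_norm, add_sub_cancel_left, norm_smul, he, mul_one, Real.norm_of_nonneg
        (mul_nonneg hs0.le hτ.1.le)]
      nlinarith [hτ.2]
    have h2 := hext _ hmem
    have e1 : b + s • ν + (s * τ) • e - b = s • (ν + τ • e) := by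
      rw [smul_add, smul_smul]; abel
    rw [e1, inner_smul_left, inner_add_left, inner_smul_left, real_inner_self_eq_norm_sq, he,
      norm_smul] at h2
    have h3 : ‖ν + τ • e‖ ≤ 2 := by
      refine (norm_add_le _ _).trans ?_
      rw [norm_smul, he, hν, Real.norm_of_nonneg hτ.1.le]; linarith [hτ.2]
    have h4 : ‖ν + τ • e‖ ^ 2 ≤ 2 ^ 2 := by gcongr
    simp only [conj_trivial, one_pow, mul_one, Real.norm_eq_abs, mul_pow, sq_abs, ← hq] at h2
    have h5 : s ^ 2 * ‖ν + τ • e‖ ^ 2 ≤ s ^ 2 * 2 ^ 2 := by gcongr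
    have h6 : s * (2 * r * q) ≤ s * (4 * s) := by nlinarith
    have h7 := le_of_mul_le_mul_left h6 hs0
    have : 0 < r * q := by positivity
    nlinarith
  have h2 : ⟪ν, e⟫ ≤ (-1:ℝ) := by
    by_contra hc
    push Not at hc
    rcases le_or_gt ⟪ν, e⟫ (0:ℝ) with h3 | h3
    · have := h1 ((1 - ⟪ν, e⟫) / 2) ⟨by linarith, by linarith⟩
      linarith
    · have := h1 (1 / 2) ⟨by norm_num, by norm_num⟩
      linarith
  have h3 : ‖e + ν‖ ^ 2 ≤ 0 := by
    rw [norm_add_sq_real, he, hν, real_inner_comm]; linarith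
  have h4 : ‖e + ν‖ = 0 := by
    have := norm_nonneg (e + ν); nlinarith
  exact eq_neg_of_add_eq_zero_left (norm_eq_zero.1 h4)

theorem aux_nu_lip {E : Type*} [NormedAddCommGroup E] [InnerProductSpace ℝ E]
    (Ω F : Set E) (ν : E → E) (r : ℝ) (hr : 0 < r) (hν : ∀ b ∈ F, ‖ν b‖ = 1)
    (hint : ∀ b ∈ F, ball (b + r • ν b) r ⊆ Ω)
    (hext : ∀ b ∈ F, ∀ y ∈ Ω, 2 * r * ⟪y - b, -ν b⟫ ≤ ‖y - b‖ ^ 2) :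
    ∀ b ∈ F, ∀ c ∈ F, r * ‖ν b - ν c‖ ≤ ‖b - c‖ := by
  have hdis : ∀ b ∈ F, ∀ c ∈ F, 2 * r ≤ ‖(c - b) + r • (ν b + ν c)‖ := by
    intro b hb c hc
    by_contra hcon
    push Not at hcon
    set Z := (c - b) + r • (ν b + ν c) with hZ
    have hmem : c + r • ν c - (1 / 2 : ℝ) • Z ∈ Ω := by
      apply hint c hc
      rw [mem_ball, dist_eq_norm, sub_sub_cancel_left, norm_neg, norm_smul]
      norm_num; linarith
    have h2 := hext b hb _ hmem
    have e1 : c + r • ν c - (1 / 2 : ℝ) • Z - b = (1 / 2 : ℝ) • Z - r • ν b := by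
      rw [hZ]; module
    rw [e1, norm_sub_sq_real, inner_neg_right, inner_sub_left, inner_smul_left, inner_smul_left,
      inner_smul_left, inner_smul_right, real_inner_self_eq_norm_sq, norm_smul, norm_smul, hν b hb] at h2
    simp only [conj_trivial, Real.norm_of_nonneg hr.le] at h2
    norm_num at h2
    have := norm_nonneg Z
    nlinarith
  intro b hb c hc
  have h1 := hdis b hb c hc
  have h2 := hdis c hc b hb
  have hp := parallelogram_law_with_norm ℝ (r • (ν b + ν c)) (c - b)
  have hq := parallelogram_law_with_norm ℝ (ν b) (ν c)
  rw [hν b hb, hν c hc] at hq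
  have e1 : ‖r • (ν b + ν c) + (c - b)‖ = ‖(c - b) + r • (ν b + ν c)‖ := by rw [add_comm]
  have e2 : ‖r • (ν b + ν c) - (c - b)‖ = ‖(b - c) + r • (ν c + ν b)‖ := by
    congr 1; module
  rw [e1, e2, norm_smul, Real.norm_of_nonneg hr.le, norm_sub_rev c b] at hp
  have := norm_nonneg (ν b - ν c)
  have h3 : (r * ‖ν b - ν c‖) ^ 2 ≤ ‖b - c‖ ^ 2 := by
    have h4 := mul_self_le_mul_self (by positivity) h1
    have h5 := mul_self_le_mul_self (by positivity) h2
    have h6 : r ^ 2 * ‖ν b + ν c‖ ^ 2 + r ^ 2 * ‖ν b - ν c‖ ^ 2 = r ^ 2 * 4 := by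
      rw [← mul_add]; congr 1; linarith
    nlinarith
  exact (sq_le_sq₀ (by positivity) (norm_nonneg _)).1 h3

open scoped ContDiff Manifold in
theorem aux_X {n : ℕ} (F : Set (EuclideanSpace ℝ (Fin n)))
    (ν : EuclideanSpace ℝ (Fin n) → EuclideanSpace ℝ (Fin n)) (r : ℝ) (hr : 0 < r)
    (hF : IsClosed F)
    (hlip : ∀ b ∈ F, ∀ c ∈ F, r * ‖ν b - ν c‖ ≤ ‖b - c‖) :
    ∃ X : EuclideanSpace ℝ (Fin n) → EuclideanSpace ℝ (Fin n), ContDiff ℝ 2 X ∧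
      ∀ b ∈ F, ‖X b - ν b‖ ≤ 1 / 8 := by
  obtain ⟨g, hg⟩ := exists_contMDiffMap_forall_mem_convex_of_local_const (n := 2)
    𝓘(ℝ, EuclideanSpace ℝ (Fin n)) (F := EuclideanSpace ℝ (Fin n))
    (t := fun x => {y | x ∈ F → ‖y - ν x‖ ≤ 1 / 8}) (fun x => by
      by_cases hx : x ∈ F
      · have : {y | x ∈ F → ‖y - ν x‖ ≤ 1 / 8} = closedBall (ν x) (1 / 8) := by
          ext y; simp [hx, dist_eq_norm]
        rw [this]; exact convex_closedBall _ _
      · simp [hx, convex_univ]) (fun x => by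
      by_cases hx : x ∈ F
      · refine ⟨ν x, ?_⟩
        filter_upwards [ball_mem_nhds x (by positivity : 0 < r / 8)] with y hy hyF
        have h1 := hlip x hx y hyF
        rw [mem_ball, dist_comm, dist_eq_norm] at hy
        have : r * ‖ν x - ν y‖ ≤ r * (1 / 8) := by linarith
        exact le_of_mul_le_mul_left this hr
      · refine ⟨0, ?_⟩
        filter_upwards [hF.isOpen_compl.mem_nhds hx] with y hy hyF
        exact absurd hyF hy)
  exact ⟨g, g.contMDiff.contDiff, fun b hb => hg b hb⟩

theorem aux_barrier_z {n : ℕ} (Ω : Set (EuclideanSpace ℝ (Fin n))) (hΩo : IsOpen Ω)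
    (hΩb : Bornology.IsBounded Ω) (U : EuclideanSpace ℝ (Fin n) → ℝ)
    (G : EuclideanSpace ℝ (Fin n) → EuclideanSpace ℝ (Fin n))
    (H : EuclideanSpace ℝ (Fin n) → (EuclideanSpace ℝ (Fin n) →L[ℝ] EuclideanSpace ℝ (Fin n)))
    (M r R α A : ℝ) (hr : 0 < r) (hα : α = (n + 1) / r ^ 2)
    (hA : A = (|M| + 1) / (2 * α * Real.exp (-α * R ^ 2)))
    (z : EuclideanSpace ℝ (Fin n)) (hz : ∀ x ∈ closure Ω, r ≤ ‖x - z‖ ∧ ‖x - z‖ ≤ R)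
    (hc : ContinuousOn U (closure Ω)) (hbd : ∀ x ∈ frontier Ω, U x = 0)
    (hG : ∀ x ∈ Ω, HasGradientAt U (G x) x) (hH : ∀ x ∈ Ω, HasFDerivAt G (H x) x)
    (hL : ∀ x ∈ Ω, ∑ i : Fin n, ⟪H x (EuclideanSpace.single i (1 : ℝ)),
        EuclideanSpace.single i (1 : ℝ)⟫ ≤ M) :
    ∀ x ∈ closure Ω, A * (Real.exp (-α * ‖x - z‖ ^ 2) - Real.exp (-α * r ^ 2)) ≤ U x := by
  intro x hx
  have hα0 : 0 < α := by rw [hα]; positivity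
  have hA0 : 0 < A := by rw [hA]; positivity
  have hcomp : IsCompact (closure Ω) :=
    Metric.isCompact_of_isClosed_isBounded isClosed_closure hΩb.closure
  obtain ⟨x0, hx0, hmin⟩ := hcomp.exists_isMinOn ⟨x, hx⟩
    (f := fun x => U x - A * Real.exp (-α * ‖x - z‖ ^ 2))
    (hc.sub (by fun_prop))
  have hkey : A * (Real.exp (-α * ‖x0 - z‖ ^ 2) - Real.exp (-α * r ^ 2)) ≤ U x0 := by
    by_cases hx0Ω : x0 ∈ Ω
    · exfalso
      set N : ℝ := ‖x0 - z‖ ^ 2 with hN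
      have hdir : ∀ i : Fin n, A * Real.exp (-α * N) * (4 * α ^ 2 * ((x0 - z) i) ^ 2 - 2 * α) ≤
          ⟪H x0 (EuclideanSpace.single i (1 : ℝ)), EuclideanSpace.single i (1 : ℝ)⟫ := by
        intro i
        set e : EuclideanSpace ℝ (Fin n) := EuclideanSpace.single i (1 : ℝ) with he
        set c : ℝ := (x0 - z) i with hcd
        have hnorm : ∀ s : ℝ, ‖x0 + s • e - z‖ ^ 2 = N + 2 * c * s + s ^ 2 := by
          intro s
          have : x0 + s • e - z = (x0 - z) + s • e := by abel
          rw [this, norm_add_sq_real, inner_smul_right, norm_smul, he,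
            EuclideanSpace.inner_single_right, mul_pow]
          simp [hN, hcd]
          ring
        have hγ : ∀ s : ℝ, HasDerivAt (fun s : ℝ => x0 + s • e) e s := by
          intro s
          simpa using ((hasDerivAt_id s).smul_const e).const_add x0
        have hev : ∀ᶠ s in nhds (0:ℝ), x0 + s • e ∈ Ω := by
          have hcont : ContinuousAt (fun s : ℝ => x0 + s • e) 0 := (hγ 0).continuousAt
          apply hcont.eventually (hΩo.mem_nhds ?_)
          simpa using hx0Ω
        have hq : ∀ s : ℝ, HasDerivAt (fun s : ℝ => -α * (N + 2 * c * s + s ^ 2))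
            (-α * (2 * c + 2 * s)) s := by
          intro s
          have h1 := (((hasDerivAt_id s).const_mul (2 * c)).const_add N).add (hasDerivAt_pow 2 s)
          have h2 := h1.const_mul (-α)
          exact h2.congr_deriv (by simp)
        have hl : ∀ s : ℝ, HasDerivAt (fun s : ℝ => -α * (2 * c + 2 * s)) (-α * 2) s := by
          intro s
          have h2 := (((hasDerivAt_id s).const_mul 2).const_add (2 * c)).const_mul (-α)
          exact h2.congr_deriv (by simp)
        have := (aux_second_order
          (φ := fun s => -U (x0 + s • e) + A * Real.exp (-α * (N + 2 * c * s + s ^ 2)))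
          (φ' := fun s => -⟪G (x0 + s • e), e⟫ +
            A * (Real.exp (-α * (N + 2 * c * s + s ^ 2)) * (-α * (2 * c + 2 * s))))
          (c := -⟪H x0 e, e⟫ + A * ((Real.exp (-α * N) * (-α * (2 * c))) * (-α * (2 * c)) +
            Real.exp (-α * N) * (-α * 2))) ?_ ?_ ?_).2
        · nlinarith
        · filter_upwards [hev] with s hs
          exact (aux_grad_curve (hG _ hs) (hγ s)).neg.add ((hq s).exp.const_mul A)
        · have h1 := aux_grad_curve2 (G := G) (H := H x0) (γ := fun s : ℝ => x0 + s • e)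
            (γ' := fun _ => e) (a := 0) (by simpa using hH x0 hx0Ω) (hγ 0) (hasDerivAt_const _ _)
          have h2 := h1.neg.add (((hq 0).exp.mul (hl 0)).const_mul A)
          exact h2.congr_deriv (by simp)
        · filter_upwards [hev] with s hs
          have h1 := hmin (subset_closure hs)
          change U x0 - A * Real.exp (-α * ‖x0 - z‖ ^ 2) ≤
            U (x0 + s • e) - A * Real.exp (-α * ‖x0 + s • e - z‖ ^ 2) at h1
          rw [hnorm, ← hN] at h1
          change -U (x0 + s • e) + A * Real.exp (-α * (N + 2 * c * s + s ^ 2)) ≤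
            -U (x0 + (0:ℝ) • e) + A * Real.exp (-α * (N + 2 * c * 0 + 0 ^ 2))
          have e0 : N + 2 * c * 0 + 0 ^ 2 = N := by ring
          rw [zero_smul, add_zero, e0]
          linarith
      have hsum := (Finset.sum_le_sum fun i (_ : i ∈ Finset.univ) => hdir i).trans (hL x0 hx0Ω)
      rw [← Finset.mul_sum, Finset.sum_sub_distrib, ← Finset.mul_sum] at hsum
      have hNs : ∑ i : Fin n, ((x0 - z) i) ^ 2 = N := by
        rw [hN, EuclideanSpace.norm_sq_eq]; simp
      rw [hNs] at hsum
      simp only [Finset.sum_const, Finset.card_univ, Fintype.card_fin, nsmul_eq_mul] at hsum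
      obtain ⟨h1, h2⟩ := hz x0 hx0
      have hNr : r ^ 2 ≤ N := by rw [hN]; gcongr
      have hNR : N ≤ R ^ 2 := by rw [hN]; gcongr
      have hαr : α * r ^ 2 = n + 1 := by rw [hα]; field_simp
      have hαN : (n:ℝ) + 1 ≤ α * N := by rw [← hαr]; gcongr
      have hn0 : (0:ℝ) ≤ n := Nat.cast_nonneg n
      have h3 : 2 * α ≤ 4 * α ^ 2 * N - n * (2 * α) := by nlinarith
      have h4 : Real.exp (-α * R ^ 2) ≤ Real.exp (-α * N) := by
        apply Real.exp_le_exp.2; nlinarith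
      have h5 : A * Real.exp (-α * R ^ 2) * (2 * α) ≤
          A * Real.exp (-α * N) * (4 * α ^ 2 * N - n * (2 * α)) := by gcongr
      have h6 : A * Real.exp (-α * R ^ 2) * (2 * α) = |M| + 1 := by
        rw [hA]; field_simp
      have := le_abs_self M
      linarith
    · have hf : x0 ∈ frontier Ω := by
        rw [hΩo.frontier_eq]; exact ⟨hx0, hx0Ω⟩
      rw [hbd x0 hf]
      have h1 := (hz x0 hx0).1
      have h2 : Real.exp (-α * ‖x0 - z‖ ^ 2) ≤ Real.exp (-α * r ^ 2) := by
        apply Real.exp_le_exp.2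
        have : r ^ 2 ≤ ‖x0 - z‖ ^ 2 := by gcongr
        nlinarith
      nlinarith
  have h1 := hmin hx
  simp only [mem_ofPred_eq] at h1
  nlinarith

theorem aux_barrier {n : ℕ} (Ω : Set (EuclideanSpace ℝ (Fin n))) (hΩo : IsOpen Ω)
    (hΩb : Bornology.IsBounded Ω) (r M : ℝ) (hr : 0 < r)
    (hext : ∀ b ∈ frontier Ω, ∃ e : EuclideanSpace ℝ (Fin n), ‖e‖ = 1 ∧
      ∀ y ∈ Ω, 2 * r * ⟪y - b, e⟫ ≤ ‖y - b‖ ^ 2) :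
    ∃ K0 ≥ 0, ∀ (U : EuclideanSpace ℝ (Fin n) → ℝ)
    (G : EuclideanSpace ℝ (Fin n) → EuclideanSpace ℝ (Fin n))
    (H : EuclideanSpace ℝ (Fin n) → (EuclideanSpace ℝ (Fin n) →L[ℝ] EuclideanSpace ℝ (Fin n))),
    ContinuousOn U (closure Ω) → (∀ x ∈ frontier Ω, U x = 0) →
    (∀ x ∈ Ω, HasGradientAt U (G x) x) → (∀ x ∈ Ω, HasFDerivAt G (H x) x) →
    (∀ x ∈ Ω, ∑ i : Fin n, ⟪H x (EuclideanSpace.single i (1 : ℝ)),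
        EuclideanSpace.single i (1 : ℝ)⟫ ≤ M) →
    ∀ x ∈ closure Ω, ∀ b ∈ frontier Ω, -(K0 * dist x b) ≤ U x := by
  obtain ⟨R0, hR0⟩ := hΩb.closure.subset_closedBall 0
  set R : ℝ := 2 * |R0| + r with hR
  set α : ℝ := (n + 1) / r ^ 2 with hα
  set A : ℝ := (|M| + 1) / (2 * α * Real.exp (-α * R ^ 2)) with hA
  have hα0 : 0 < α := by rw [hα]; positivity
  have hA0 : 0 < A := by rw [hA]; positivity
  have hR00 : 0 ≤ R := by positivity
  refine ⟨2 * A * α * R, by positivity, ?_⟩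
  intro U G H hc hbd hG hH hL x hx b hb
  obtain ⟨e, he, hext⟩ := hext b hb
  set z := b + r • e with hz
  have hext' : ∀ y ∈ closure Ω, 2 * r * ⟪y - b, e⟫ ≤ ‖y - b‖ ^ 2 := by
    have hcl : IsClosed {y : EuclideanSpace ℝ (Fin n) | 2 * r * ⟪y - b, e⟫ ≤ ‖y - b‖ ^ 2} :=
      isClosed_le (by fun_prop) (by fun_prop)
    exact fun y hy => closure_minimal hext hcl hy
  have hbb : ‖b‖ ≤ |R0| := by
    have := hR0 (frontier_subset_closure hb)
    rw [mem_closedBall_zero_iff] at this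
    exact this.trans (le_abs_self _)
  have hzb : ∀ y ∈ closure Ω, r ≤ ‖y - z‖ ∧ ‖y - z‖ ≤ R := by
    intro y hy
    have e1 : y - z = (y - b) - r • e := by rw [hz]; abel
    have hre : ‖r • e‖ = r := by rw [norm_smul, he, Real.norm_of_nonneg hr.le, mul_one]
    constructor
    · have h1 := hext' y hy
      have h2 : r ^ 2 ≤ ‖y - z‖ ^ 2 := by
        rw [e1, norm_sub_sq_real, hre, inner_smul_right]; linarith
      exact (sq_le_sq₀ hr.le (norm_nonneg _)).1 h2
    · rw [e1]
      have h3 := hR0 hy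
      rw [mem_closedBall_zero_iff] at h3
      have h4 := norm_sub_le (y - b) (r • e)
      have h5 := norm_sub_le y b
      have := le_abs_self R0
      rw [hre] at h4
      linarith
  have h1 := aux_barrier_z Ω hΩo hΩb U G H M r R α A hr hα hA z hzb hc hbd hG hH hL x hx
  obtain ⟨h2, h3⟩ := hzb x hx
  set ρ := ‖x - z‖ with hρ
  have h4 : ρ ≤ r + dist x b := by
    have e1 : x - z = (x - b) - r • e := by rw [hz]; abel
    have hre : ‖r • e‖ = r := by rw [norm_smul, he, Real.norm_of_nonneg hr.le, mul_one]
    have h4 := norm_sub_le (x - b) (r • e)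
    rw [hρ, e1, dist_eq_norm]; linarith
  have h5 : Real.exp (-α * r ^ 2) - Real.exp (-α * ρ ^ 2) ≤ α * (ρ ^ 2 - r ^ 2) := by
    have h6 := Real.add_one_le_exp (-(α * (ρ ^ 2 - r ^ 2)))
    have h7 : Real.exp (-α * ρ ^ 2) = Real.exp (-α * r ^ 2) * Real.exp (-(α * (ρ ^ 2 - r ^ 2))) := by
      rw [← Real.exp_add]; congr 1; ring
    have h8 : Real.exp (-α * r ^ 2) ≤ 1 := by
      apply Real.exp_le_one_iff.2; have := mul_pos hα0 (pow_pos hr 2); linarith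
    have h9 := Real.exp_pos (-α * r ^ 2)
    have h10 : 0 ≤ α * (ρ ^ 2 - r ^ 2) := by
      apply mul_nonneg hα0.le; nlinarith
    rw [h7]
    nlinarith
  have h6 : ρ ^ 2 - r ^ 2 ≤ 2 * R * dist x b := by
    have hd := dist_nonneg (x := x) (y := b)
    have : (ρ - r) * (ρ + r) ≤ dist x b * (2 * R) := by
      apply mul_le_mul (by linarith) (by linarith) (by linarith) hd
    nlinarith
  have h7 : A * (Real.exp (-α * r ^ 2) - Real.exp (-α * ρ ^ 2)) ≤ A * (α * (2 * R * dist x b)) := by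
    apply mul_le_mul_of_nonneg_left _ hA0.le
    exact h5.trans (mul_le_mul_of_nonneg_left h6 hα0.le)
  nlinarith

theorem aux_foot {E : Type*} [NormedAddCommGroup E] [InnerProductSpace ℝ E] [CompleteSpace E]
    (F : Set E) (y b g : E)
    (hb : b ∈ F) (hd : dist y b = infDist y F) (hpos : 0 < infDist y F)
    (hg : ‖g‖ = 1) (hgr : HasGradientAt (fun x => infDist x F) g y) :
    y = b + (infDist y F) • g := by
  set d := infDist y F with hdd
  have hyb : ‖y - b‖ = d := by rw [← dist_eq_norm]; exact hd
  set e : E := d⁻¹ • (y - b) with he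
  have hen : ‖e‖ = 1 := by
    rw [he, norm_smul, hyb, Real.norm_of_nonneg (by positivity)]; field_simp
  have hde : d • e = y - b := by rw [he, smul_smul, mul_inv_cancel₀ hpos.ne', one_smul]
  have hγ : HasDerivAt (fun s : ℝ => y + s • e) e 0 := by
    simpa using ((hasDerivAt_id (0:ℝ)).smul_const e).const_add y
  have h1 : HasDerivAt (fun s : ℝ => infDist (y + s • e) F) ⟪g, e⟫ 0 :=
    aux_grad_curve (U := fun x => infDist x F) (by simpa using hgr) hγ
  have h2 : 1 ≤ ⟪g, e⟫ := by
    have h3 : HasDerivAt (fun s : ℝ => infDist (y + s • e) F - s) (⟪g, e⟫ - 1) 0 :=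
      h1.sub (hasDerivAt_id 0)
    have h4 := h3.hasDerivWithinAt (s := Iic 0)
    by_contra hc
    push Not at hc
    have hsl := h3.tendsto_slope
    have hlt : ∀ᶠ s in nhdsWithin (0:ℝ) {0}ᶜ, slope (fun s : ℝ => infDist (y + s • e) F - s) 0 s < 0 :=
      hsl.eventually (gt_mem_nhds (by linarith))
    have hlt2 := hlt.filter_mono (nhdsWithin_mono 0 (fun s (hs : s ∈ Iio (0:ℝ)) => ne_of_lt hs))
    have hev : ∀ᶠ s in nhdsWithin (0:ℝ) (Iio 0), s ∈ Ioo (-d) 0 := Ioo_mem_nhdsLT (by linarith)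
    obtain ⟨s, hs1, hs2⟩ := (hlt2.and hev).exists
    rw [slope_def_field] at hs1
    have h5 : infDist (y + s • e) F ≤ d + s := by
      refine (infDist_le_dist_of_mem hb).trans ?_
      have : y + s • e - b = (d + s) • e := by rw [add_smul, hde]; abel
      rw [dist_eq_norm, this, norm_smul, hen, mul_one, Real.norm_of_nonneg (by linarith [hs2.1])]
    have h6 := (div_lt_iff_of_neg (by linarith [hs2.2] : s - 0 < 0)).1 hs1
    simp only [zero_smul, add_zero, ← hdd] at h6
    linarith
  have h3 : ‖g - e‖ ^ 2 ≤ 0 := by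
    rw [norm_sub_sq_real, hen, hg]; linarith
  have h4 : ‖g - e‖ = 0 := by
    have := norm_nonneg (g - e); nlinarith
  rw [sub_eq_zero.1 (norm_eq_zero.1 h4), hde]; abel

theorem aux_left {f : ℝ → ℝ} {D l s : ℝ} (hls : l < s) (hf : HasDerivAt f D s)
    (hmax : ∀ q ∈ Icc l s, f q ≤ f s) : 0 ≤ D := by
  by_contra hc
  push Not at hc
  have hlt : ∀ᶠ q in nhdsWithin s {s}ᶜ, slope f s q < 0 :=
    hf.tendsto_slope.eventually (gt_mem_nhds hc)
  have hlt2 := hlt.filter_mono (nhdsWithin_mono s (fun q (hq : q ∈ Iio s) => ne_of_lt hq))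
  have hev : ∀ᶠ q in nhdsWithin s (Iio s), q ∈ Ioo l s := Ioo_mem_nhdsLT hls
  obtain ⟨q, hq1, hq2⟩ := (hlt2.and hev).exists
  rw [slope_def_field] at hq1
  have h6 := (div_lt_iff_of_neg (by linarith [hq2.2] : q - s < 0)).1 hq1
  have := hmax q ⟨hq2.1.le, hq2.2.le⟩
  linarith

theorem aux_c {E : Type*} [NormedAddCommGroup E] [InnerProductSpace ℝ E] (X ν : E) (hν : ‖ν‖ = 1)
    (h : ‖X - ν‖ ≤ 1 / 4) : ∃ c ∈ Icc (1 / 4 : ℝ) 1, ‖X - c • ν‖ = 1 / 2 := by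
  have hcont : ContinuousOn (fun c : ℝ => ‖X - c • ν‖) (Icc (1 / 4 : ℝ) 1) := by fun_prop
  have := intermediate_value_Icc' (by norm_num : (1 / 4 : ℝ) ≤ 1) hcont
  apply this
  constructor
  · simp only [one_smul]; linarith
  · have e : X - (1 / 4 : ℝ) • ν = (3 / 4 : ℝ) • ν - (ν - X) := by module
    have h1 := norm_sub_norm_le ((3 / 4 : ℝ) • ν) (ν - X)
    rw [norm_smul, hν, norm_sub_rev ν X] at h1
    change 1 / 2 ≤ ‖X - (1 / 4 : ℝ) • ν‖
    rw [e]
    norm_num at h1 h ⊢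
    linarith

theorem aux_geo {E : Type*} [NormedAddCommGroup E] [InnerProductSpace ℝ E]
    (Ω : Set E) (ν X : E → E) (s0 D1 δ1 h : ℝ) (hD1 : 0 ≤ D1) (hδ1 : 0 < δ1) (hh : 0 < h)
    (hc1 : δ1 + 10 * h < s0) (hc2 : D1 * (δ1 + 4 * h) ≤ 1 / 8)
    (hν : ∀ b ∈ frontier Ω, ‖ν b‖ = 1)
    (hball : ∀ b ∈ frontier Ω, ball (b + s0 • ν b) s0 ⊆ Ω)
    (hfoot : ∀ y ∈ closure Ω, infDist y (frontier Ω) < s0 → ∃ b ∈ frontier Ω,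
      y = b + (infDist y (frontier Ω)) • ν b)
    (hX : ∀ b ∈ frontier Ω, ‖X b - ν b‖ ≤ 1 / 8)
    (hL : ∀ x ∈ closure Ω, ∀ y ∈ closure Ω, ‖X x - X y‖ ≤ D1 * ‖x - y‖)
    (x ω : E) (hx : x ∈ closure Ω) (hxd : infDist x (frontier Ω) ≤ δ1) (hω : ‖ω‖ = 1 / 2)
    (hy : x - h • X x + h • ω ∈ closure Ω) :
    ‖X x - ω‖ ≤ 2 ∧ ∀ s ∈ Ioc 0 h, x - h • X x + h • ω + s • (X x - ω) ∈ Ω := by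
  have hnn : ∀ b ∈ frontier Ω, ∀ d : ℝ, 0 ≤ d → ‖d • ν b‖ = d := by
    intro b hb d hd
    rw [norm_smul, hν b hb, Real.norm_of_nonneg hd, mul_one]
  have hη : ‖X x - ω‖ ≤ 2 := by
    obtain ⟨b, hb, hxb⟩ := hfoot x hx (by linarith)
    have h1 := hL x hx b (frontier_subset_closure hb)
    have h2 : ‖x - b‖ ≤ δ1 := by
      have : x - b = infDist x (frontier Ω) • ν b := by rw [sub_eq_iff_eq_add']; exact hxb
      rw [this, hnn b hb _ infDist_nonneg]; exact hxd
    have h3 : D1 * ‖x - b‖ ≤ D1 * (δ1 + 4 * h) := by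
      apply mul_le_mul_of_nonneg_left _ hD1; linarith
    have h4 : X x - ω = (X x - X b) + (X b - ν b) + ν b - ω := by abel
    have h5 := norm_sub_le ((X x - X b) + (X b - ν b) + ν b) ω
    have h6 := norm_add₃_le (a := X x - X b) (b := X b - ν b) (c := ν b)
    have h7 := hX b hb
    have h8 := hν b hb
    rw [h4]; linarith
  refine ⟨hη, ?_⟩
  intro s hs
  set y := x - h • X x + h • ω with hyd
  set η := X x - ω with hηd
  have hxy : x - y = h • η := by rw [hyd, hηd, smul_sub]; abel
  have hxyn : ‖x - y‖ ≤ 2 * h := by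
    rw [hxy, norm_smul, Real.norm_of_nonneg hh.le]; nlinarith
  have hdy : infDist y (frontier Ω) ≤ δ1 + 2 * h := by
    have := infDist_le_infDist_add_dist (s := frontier Ω) (x := y) (y := x)
    rw [dist_comm, dist_eq_norm] at this
    linarith
  obtain ⟨b, hb, hyb⟩ := hfoot y hy (by linarith)
  set d := infDist y (frontier Ω) with hd
  have hd0 : 0 ≤ d := infDist_nonneg
  have h1 := hL x hx b (frontier_subset_closure hb)
  have h2 : ‖x - b‖ ≤ δ1 + 4 * h := by
    have : x - b = (x - y) + d • ν b := by
      have : y - b = d • ν b := by rw [sub_eq_iff_eq_add']; exact hyb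
      rw [← this]; abel
    rw [this]
    have := norm_add_le (x - y) (d • ν b)
    rw [hnn b hb d hd0] at this
    linarith
  have h3 : D1 * ‖x - b‖ ≤ D1 * (δ1 + 4 * h) := mul_le_mul_of_nonneg_left h2 hD1
  have h7 := hX b hb
  have h8 := hν b hb
  have hin : 1 / 4 ≤ ⟪η, ν b⟫ := by
    have e : η = ν b + ((X x - X b) + (X b - ν b)) - ω := by rw [hηd]; abel
    rw [e, inner_sub_left, inner_add_left, real_inner_self_eq_norm_sq, h8]
    have i1 := abs_le.1 (abs_real_inner_le_norm ((X x - X b) + (X b - ν b)) (ν b))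
    have i2 := abs_le.1 (abs_real_inner_le_norm ω (ν b))
    have i3 := norm_add_le (X x - X b) (X b - ν b)
    rw [h8] at i1 i2
    linarith [i1.1, i2.2]
  apply hball b hb
  rw [mem_ball, dist_eq_norm]
  have e : y + s • η - (b + s0 • ν b) = s • η - (s0 - d) • ν b := by
    have e' : y - b = d • ν b := by rw [sub_eq_iff_eq_add']; exact hyb
    have e'' : y + s • η - (b + s0 • ν b) = (y - b) + s • η - s0 • ν b := by abel
    rw [e'', e']; module
  rw [e]
  have hk : 0 < s0 - d := by linarith
  have hsq : ‖s • η - (s0 - d) • ν b‖ ^ 2 < s0 ^ 2 := by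
    rw [norm_sub_sq_real, hnn b hb _ hk.le, inner_smul_left, inner_smul_right, norm_smul,
      Real.norm_of_nonneg hs.1.le]
    simp only [conj_trivial]
    have j1 : (s * ‖η‖) ^ 2 ≤ 4 * s ^ 2 := by
      have : ‖η‖ ^ 2 ≤ 2 ^ 2 := by gcongr
      rw [mul_pow]; nlinarith [sq_nonneg s]
    have j2 : s * ((s0 - d) * (1 / 4)) ≤ s * ((s0 - d) * ⟪η, ν b⟫) := by
      have := hs.1.le
      gcongr
    have j3 : s * (8 * s) < s * (s0 - d) := by
      apply mul_lt_mul_of_pos_left _ hs.1; linarith [hs.2]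
    have j4 : (s0 - d) ^ 2 ≤ s0 ^ 2 := by gcongr; linarith
    nlinarith
  exact lt_of_pow_lt_pow_left₀ 2 (by linarith) hsq

theorem aux_mv {E : Type*} [NormedAddCommGroup E] [InnerProductSpace ℝ E] [CompleteSpace E]
    (Ω : Set E) (U : E → ℝ) (G : E → E) (y η : E) (h k : ℝ) (hh : 0 < h) (hk : 0 ≤ k)
    (hc : ContinuousOn U (closure Ω)) (hG : ∀ x ∈ Ω, HasGradientAt U (G x) x)
    (hy : y ∈ closure Ω) (hη : ‖η‖ ≤ 2) (hseg : ∀ s ∈ Ioc 0 h, y + s • η ∈ Ω)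
    (hb : ∀ s ∈ Ioc 0 h, ‖G (y + s • η)‖ ≤ k) : U y - U (y + h • η) ≤ 2 * h * k := by
  have hγ : ∀ s : ℝ, HasDerivAt (fun s : ℝ => y + s • η) η s := by
    intro s
    simpa using ((hasDerivAt_id s).smul_const η).const_add y
  obtain ⟨s, hs, hsl⟩ := exists_hasDerivAt_eq_slope (fun s : ℝ => U (y + s • η))
    (fun s => ⟪G (y + s • η), η⟫) hh
    (hc.comp (by fun_prop) (fun s hs => by
      rcases eq_or_lt_of_le hs.1 with h0 | h0
      · simpa [← h0] using hy
      · exact subset_closure (hseg s ⟨h0, hs.2⟩)))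
    (fun s hs => aux_grad_curve (hG _ (hseg s ⟨hs.1, hs.2.le⟩)) (hγ s))
  have h1 := hb s ⟨hs.1, hs.2.le⟩
  have h2 := abs_le.1 (abs_real_inner_le_norm (G (y + s • η)) η)
  have h3 : ‖G (y + s • η)‖ * ‖η‖ ≤ k * 2 := mul_le_mul h1 hη (norm_nonneg _) hk
  have h4 : -(k * 2) ≤ ⟪G (y + s • η), η⟫ := by linarith [h2.1]
  rw [hsl] at h4
  simp only [zero_smul, add_zero, sub_zero] at h4
  rw [le_div_iff₀ hh] at h4
  linarith

set_option maxHeartbeats 1000000 in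
theorem aux_max {n : ℕ} (p : ℝ) (hp : 2 < p)
    (Ω : Set (EuclideanSpace ℝ (Fin n))) (hΩo : IsOpen Ω) (hΩb : Bornology.IsBounded Ω)
    (X : EuclideanSpace ℝ (Fin n) → EuclideanSpace ℝ (Fin n)) (hX : ContDiff ℝ 2 X)
    (D1 D2 : ℝ) (hD1 : ∀ x ∈ Ω, ‖fderiv ℝ X x‖ ≤ D1)
    (hD2 : ∀ x ∈ Ω, ‖fderiv ℝ (fderiv ℝ X) x‖ ≤ D2) (hD1n : 0 ≤ D1) (hD2n : 0 ≤ D2)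
    (T : ℝ) (hT : 0 < T)
    (u : EuclideanSpace ℝ (Fin n) → ℝ → ℝ)
    (G : EuclideanSpace ℝ (Fin n) → ℝ → EuclideanSpace ℝ (Fin n))
    (H : EuclideanSpace ℝ (Fin n) → ℝ → (EuclideanSpace ℝ (Fin n) →L[ℝ] EuclideanSpace ℝ (Fin n)))
    (u' : EuclideanSpace ℝ (Fin n) → ℝ → ℝ)
    (hu_cont : ContinuousOn (fun q : EuclideanSpace ℝ (Fin n) × ℝ => u q.1 q.2) (closure Ω ×ˢ Icc 0 T))
    (hu_bd : ∀ b ∈ frontier Ω, ∀ t ∈ Icc (0 : ℝ) T, u b t = 0)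
    (hG2 : ∀ t ∈ Ioc (0 : ℝ) T, ∀ x ∈ Ω, HasGradientAt (fun y => u y t) (G x t) x)
    (hH : ∀ t ∈ Ioc (0 : ℝ) T, ∀ x ∈ Ω, HasFDerivAt (fun y => G y t) (H x t) x)
    (hu' : ∀ t ∈ Ioc (0 : ℝ) T, ∀ x ∈ Ω, HasDerivAt (fun s => u x s) (u' x t) t)
    (hPDE : ∀ t ∈ Ioc (0 : ℝ) T, ∀ x ∈ Ω,
      u' x t - ∑ i : Fin n, ⟪H x t (EuclideanSpace.single i (1 : ℝ)),
        EuclideanSpace.single i (1 : ℝ)⟫ = ‖G x t‖ ^ p)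
    (M : ℝ) (hMn : 0 ≤ M) (hM : ∀ x ∈ Ω, ∀ t ∈ Icc (T / 2) T, |u' x t| ≤ M)
    (C B A : ℝ) (hC : C = n * (D2 + 200 * D1 ^ 2)) (hB : B = 2 * p * D1 + 3 * D1 + C)
    (hA : A = 3 * D1 * M + C + 1)
    (h δ1 : ℝ) (hh : 0 < h) (hδ1 : 4 * h ≤ δ1) (hhD : h * D1 ≤ 1 / 4) (hhB : h * B ≤ 1 / 2)
    (hgeo : ∀ x ∈ closure Ω, infDist x (frontier Ω) ≤ δ1 → ∀ ω, ‖ω‖ = 1 / 2 →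
      x - h • X x + h • ω ∈ closure Ω →
      ‖X x - ω‖ ≤ 2 ∧ ∀ s ∈ Ioc 0 h, x - h • X x + h • ω + s • (X x - ω) ∈ Ω)
    (K0 Cg K1 U0 : ℝ) (hK0 : 0 ≤ K0) (hCg : 0 ≤ Cg) (hK1 : 0 ≤ K1) (hU0 : 0 ≤ U0)
    (hKb : ∀ s ∈ Ico (T / 2) T, ∀ x ∈ closure Ω, ∀ b ∈ frontier Ω, -(K0 * dist x b) ≤ u x s)
    (hCgb : ∀ x ∈ Ω, δ1 / 2 ≤ infDist x (frontier Ω) → ∀ s ∈ Ico (0:ℝ) T, ‖G x s‖ ≤ Cg)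
    (hK1b : ∀ x ∈ Ω, ‖G x (T / 2)‖ ≤ K1)
    (hU0b : ∀ x ∈ closure Ω, ∀ s ∈ Icc 0 T, |u x s| ≤ U0)
    (t : ℝ) (ht : t ∈ Ico (T / 2) T) :
    ∀ x ∈ closure Ω, infDist x (frontier Ω) ≤ δ1 → ∀ ω, ‖ω‖ = 1 / 2 →
      x - h • X x + h • ω ∈ closure Ω →
      u (x - h • X x + h • ω) t - (1 - h * B) * u x t - h * A * t ≤
        h * (2 * K0 + 2 * Cg + 2 * K1 + B * U0) := by
  intro x₁ hx₁ hx₁d ω₁ hω₁ hy₁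
  have hCn : 0 ≤ C := by rw [hC]; positivity
  have hBn : 0 ≤ B := by rw [hB]; have : 0 < p := by linarith
                         positivity
  have hAn : 0 ≤ A := by rw [hA]; positivity
  have hcomp : IsCompact (closure Ω) :=
    Metric.isCompact_of_isClosed_isBounded isClosed_closure hΩb.closure
  have hXc : Continuous X := hX.continuous
  set Y : EuclideanSpace ℝ (Fin n) × EuclideanSpace ℝ (Fin n) × ℝ → EuclideanSpace ℝ (Fin n) :=
    fun q => q.1 - h • X q.1 + h • q.2.1 with hY
  have hYc : Continuous Y := by fun_prop
  set 𝒦 : Set (EuclideanSpace ℝ (Fin n) × EuclideanSpace ℝ (Fin n) × ℝ) :=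
    (closure Ω ×ˢ (sphere 0 (1 / 2) ×ˢ Icc (T / 2) t)) ∩
      ({q | infDist q.1 (frontier Ω) ≤ δ1} ∩ Y ⁻¹' (closure Ω)) with hK
  have hKc : IsCompact 𝒦 := by
    apply (hcomp.prod ((isCompact_sphere _ _).prod isCompact_Icc)).inter_right
    apply IsClosed.inter
    · exact isClosed_le ((continuous_infDist_pt _).comp continuous_fst) continuous_const
    · exact isClosed_closure.preimage hYc
  set Ψ : EuclideanSpace ℝ (Fin n) × EuclideanSpace ℝ (Fin n) × ℝ → ℝ :=
    fun q => u (Y q) q.2.2 - (1 - h * B) * u q.1 q.2.2 - h * A * q.2.2 with hΨ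
  have htT : ∀ s ∈ Icc (T / 2) t, s ∈ Icc 0 T := fun s hs => ⟨by linarith [hs.1], by linarith [hs.2, ht.2]⟩
  have hΨc : ContinuousOn Ψ 𝒦 := by
    have c1 : ContinuousOn (fun q : EuclideanSpace ℝ (Fin n) × EuclideanSpace ℝ (Fin n) × ℝ =>
        u (Y q) q.2.2) 𝒦 :=
      hu_cont.comp (f := fun q : EuclideanSpace ℝ (Fin n) × EuclideanSpace ℝ (Fin n) × ℝ =>
        (Y q, q.2.2)) (by fun_prop) (fun q hq => ⟨hq.2.2, htT _ hq.1.2.2⟩)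
    have c2 : ContinuousOn (fun q : EuclideanSpace ℝ (Fin n) × EuclideanSpace ℝ (Fin n) × ℝ =>
        u q.1 q.2.2) 𝒦 :=
      hu_cont.comp (f := fun q : EuclideanSpace ℝ (Fin n) × EuclideanSpace ℝ (Fin n) × ℝ =>
        (q.1, q.2.2)) (by fun_prop) (fun q hq => ⟨hq.1.1, htT _ hq.1.2.2⟩)
    exact (c1.sub (c2.const_smul (1 - h * B))).sub (by fun_prop)
  have hmem : ∀ x ω s, x ∈ closure Ω → infDist x (frontier Ω) ≤ δ1 → ‖ω‖ = 1 / 2 →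
      x - h • X x + h • ω ∈ closure Ω → s ∈ Icc (T / 2) t → (x, ω, s) ∈ 𝒦 := by
    intro x ω s h1 h2 h3 h4 h5
    exact ⟨⟨h1, by simpa using h3, h5⟩, h2, h4⟩
  have hq₁ : (x₁, ω₁, t) ∈ 𝒦 := hmem _ _ _ hx₁ hx₁d hω₁ hy₁ ⟨ht.1, le_rfl⟩
  obtain ⟨⟨x, ω, s⟩, hq, hmax⟩ := hKc.exists_isMaxOn ⟨_, hq₁⟩ hΨc
  have hmax' : ∀ x' ω' s', x' ∈ closure Ω → infDist x' (frontier Ω) ≤ δ1 → ‖ω'‖ = 1 / 2 →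
      x' - h • X x' + h • ω' ∈ closure Ω → s' ∈ Icc (T / 2) t →
      u (x' - h • X x' + h • ω') s' - (1 - h * B) * u x' s' - h * A * s' ≤
      u (x - h • X x + h • ω) s - (1 - h * B) * u x s - h * A * s :=
    fun x' ω' s' h1 h2 h3 h4 h5 => hmax (hmem x' ω' s' h1 h2 h3 h4 h5)
  refine (hmax' x₁ ω₁ t hx₁ hx₁d hω₁ hy₁ ⟨ht.1, le_rfl⟩).trans ?_
  obtain ⟨⟨hxc, hωs, hs⟩, hxd, hyc⟩ := hq
  have hω : ‖ω‖ = 1 / 2 := by simpa using hωs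
  change x ∈ closure Ω at hxc
  change s ∈ Icc (T / 2) t at hs
  change infDist x (frontier Ω) ≤ δ1 at hxd
  change x - h • X x + h • ω ∈ closure Ω at hyc
  obtain ⟨hη, hseg⟩ := hgeo x hxc hxd ω hω hyc
  have hyd : x - h • X x + h • ω + h • (X x - ω) = x := by rw [smul_sub]; abel
  have hxΩ : x ∈ Ω := by
    have := hseg h ⟨hh, le_rfl⟩
    rwa [hyd] at this
  set y := x - h • X x + h • ω with hyy
  have hs0 : 0 < s := by linarith [hs.1]
  have hsT : s < T := by linarith [hs.2, ht.2]
  have hAs : 0 ≤ h * A * s := by positivity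
  have hux := abs_le.1 (hU0b x hxc s ⟨hs0.le, hsT.le⟩)
  have huB : h * B * u x s ≤ h * B * U0 := mul_le_mul_of_nonneg_left hux.2 (by positivity)
  have hBU : 0 ≤ h * B * U0 := by positivity
  have hcs : ContinuousOn (fun z => u z s) (closure Ω) :=
    hu_cont.comp (f := fun z => (z, s)) (by fun_prop) (fun z hz => ⟨hz, hs0.le, hsT.le⟩)
  have p1 := mul_nonneg hh.le hK0
  have p2 := mul_nonneg hh.le hCg
  have p3 := mul_nonneg hh.le hK1
  by_cases hyΩ : y ∈ Ω
  swap
  · have hyf : y ∈ frontier Ω := by rw [hΩo.frontier_eq]; exact ⟨hyc, hyΩ⟩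
    rw [hu_bd y hyf s ⟨hs0.le, hsT.le⟩]
    have h1 := hKb s ⟨hs.1, hsT⟩ x hxc y hyf
    have h2 : dist x y ≤ 2 * h := by
      have : x - y = h • (X x - ω) := by rw [hyy, smul_sub]; abel
      rw [dist_eq_norm, this, norm_smul, Real.norm_of_nonneg hh.le]; nlinarith
    have h3 : K0 * dist x y ≤ K0 * (2 * h) := mul_le_mul_of_nonneg_left h2 hK0
    have h4 : (1 - h * B) * -(K0 * (2 * h)) ≤ (1 - h * B) * u x s :=
      mul_le_mul_of_nonneg_left (by linarith) (by linarith)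
    have h5 : 0 ≤ h * B * (K0 * (2 * h)) := by positivity
    linarith
  rcases eq_or_lt_of_le hxd with hxe | hxl
  · have h1 := aux_mv Ω (fun z => u z s) (fun z => G z s) y (X x - ω) h Cg hh hCg hcs
      (hG2 s ⟨hs0, hsT.le⟩) hyc hη hseg (fun s' hs' => by
        apply hCgb _ (hseg s' hs') _ s ⟨hs0.le, hsT⟩
        have h2 := infDist_le_infDist_add_dist (s := frontier Ω) (x := x) (y := y + s' • (X x - ω))
        have h3 : x - (y + s' • (X x - ω)) = (h - s') • (X x - ω) := by
          nth_rewrite 1 [← hyd]; rw [sub_smul]; abel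
        rw [dist_eq_norm, h3, norm_smul, Real.norm_of_nonneg (by linarith [hs'.2])] at h2
        have h4 : (h - s') * ‖X x - ω‖ ≤ h * 2 :=
          mul_le_mul (by linarith [hs'.1]) hη (norm_nonneg _) hh.le
        linarith)
    simp only [hyd] at h1
    linarith
  rcases eq_or_lt_of_le hs.1 with hse | hsl
  · have h1 := aux_mv Ω (fun z => u z s) (fun z => G z s) y (X x - ω) h K1 hh hK1 hcs
      (hG2 s ⟨hs0, hsT.le⟩) hyc hη hseg (fun s' hs' => by
        rw [← hse]; exact hK1b _ (hseg s' hs'))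
    simp only [hyd] at h1
    linarith
  exfalso
  have hsI : s ∈ Ioc 0 T := ⟨hs0, hsT.le⟩
  have hV : Ω ∩ {z | infDist z (frontier Ω) < δ1} ∈ nhds x :=
    (hΩo.inter (isOpen_lt (continuous_infDist_pt _) continuous_const)).mem_nhds ⟨hxΩ, hxl⟩
  obtain ⟨κ, hκ, hgr, hsp⟩ := aux_core X hX Ω hΩo (fun z => u z s) (fun z => G z s)
    (fun z => H z s) (hG2 s hsI) (hH s hsI) x ω h (1 - h * B) D1 D2 hh (by linarith) hhD
    (hD1 x hxΩ) (hD2 x hxΩ) hω hxΩ y hyy hyΩ _ hV (fun x' hx' ω' hω' hy' => by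
      have := hmax' x' ω' s (subset_closure hx'.1) (le_of_lt hx'.2) hω' (subset_closure hy') hs
      linarith)
  have htime := aux_left (f := fun q => u y q - (1 - h * B) * u x q - h * A * q)
    (D := u' y s - (1 - h * B) * u' x s - h * A) hsl
    (by
      have h3 := ((hu' s hsI y hyΩ).sub ((hu' s hsI x hxΩ).const_mul (1 - h * B))).sub
        ((hasDerivAt_id s).const_mul (h * A))
      exact h3.congr_deriv (by simp))
    (fun q hq => hmax' x ω q hxc hxd hω hyc ⟨hq.1, hq.2.trans hs.2⟩)
  exact aux_algebra p h B A M D1 C ‖G y s‖ κ ‖G x s‖ (u' y s) (u' x s) _ _ hp hh hCn hD1n hMn hB hA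
    hhD hhB (norm_nonneg _) hκ hgr (hM y hyΩ s ⟨hs.1, hsT.le⟩) (hPDE s hsI y hyΩ) (hPDE s hsI x hxΩ)
    (by linarith) (by rw [hC]; exact hsp)

set_option maxHeartbeats 2000000 in
theorem stmt6 {n : ℕ} (hn : 1 ≤ n)
    (p β cp dp : ℝ) (hp : 2 < p) (hβ : β = 1 / (p - 1))
    (hcp : cp = β ^ β / (1 - β)) (hdp : dp = β ^ β)
    (Ω : Set (EuclideanSpace ℝ (Fin n))) (hΩo : IsOpen Ω) (hΩb : Bornology.IsBounded Ω) (hΩc2 : IsC2Boundary Ω)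
    (δ : EuclideanSpace ℝ (Fin n) → ℝ) (hδ : ∀ x, δ x = infDist x (frontier Ω))
    (δ₀ : ℝ) (hδ₀ : 0 < δ₀)
    (Ωδ : Set (EuclideanSpace ℝ (Fin n))) (hΩδ : Ωδ = {x ∈ Ω | δ x < δ₀})
    (hδC2 : ContDiffOn ℝ 2 δ Ωδ)
    (P : EuclideanSpace ℝ (Fin n) → EuclideanSpace ℝ (Fin n))
    (hP : ∀ x ∈ Ωδ, P x ∈ frontier Ω ∧ dist x (P x) = δ x ∧
      ∀ b ∈ frontier Ω, dist x b = δ x → b = P x)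
    (hsph : ∀ b ∈ frontier Ω, ∃ y, ball y δ₀ ⊆ Ω ∧ dist y b = δ₀)
    (ν : EuclideanSpace ℝ (Fin n) → EuclideanSpace ℝ (Fin n))
    (hν1 : ∀ b ∈ frontier Ω, ‖ν b‖ = 1 ∧
      ∀ s ∈ Ioo (0 : ℝ) δ₀, b + s • ν b ∈ Ω ∧ δ (b + s • ν b) = s)
    (hν2 : ∀ x ∈ Ωδ, ν x = ν (P x) ∧ HasGradientAt δ (ν x) x)
    (T : ℝ) (hT : 0 < T)
    (u : EuclideanSpace ℝ (Fin n) → ℝ → ℝ)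
    (G : EuclideanSpace ℝ (Fin n) → ℝ → EuclideanSpace ℝ (Fin n))
    (H : EuclideanSpace ℝ (Fin n) → ℝ → (EuclideanSpace ℝ (Fin n) →L[ℝ] EuclideanSpace ℝ (Fin n)))
    (u' : EuclideanSpace ℝ (Fin n) → ℝ → ℝ)
    (hu_cont : ContinuousOn (fun q : EuclideanSpace ℝ (Fin n) × ℝ => u q.1 q.2) (closure Ω ×ˢ Icc 0 T))
    (hu_bd : ∀ b ∈ frontier Ω, ∀ t ∈ Icc (0 : ℝ) T, u b t = 0)
    (hG : ∀ t ∈ Ico (0 : ℝ) T, ∀ x ∈ closure Ω,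
      HasGradientWithinAt (fun y => u y t) (G x t) (closure Ω) x)
    (hG_cont : ContinuousOn (fun q : EuclideanSpace ℝ (Fin n) × ℝ => G q.1 q.2) (closure Ω ×ˢ Ico 0 T))
    (hG2 : ∀ t ∈ Ioc (0 : ℝ) T, ∀ x ∈ Ω, HasGradientAt (fun y => u y t) (G x t) x)
    (hH : ∀ t ∈ Ioc (0 : ℝ) T, ∀ x ∈ Ω, HasFDerivAt (fun y => G y t) (H x t) x)
    (hu' : ∀ t ∈ Ioc (0 : ℝ) T, ∀ x ∈ Ω, HasDerivAt (fun s => u x s) (u' x t) t)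
    (hreg : ContinuousOn (fun q : EuclideanSpace ℝ (Fin n) × ℝ =>
      (u q.1 q.2, G q.1 q.2, H q.1 q.2, u' q.1 q.2)) (Ω ×ˢ Ioc 0 T))
    (hPDE : ∀ t ∈ Ioc (0 : ℝ) T, ∀ x ∈ Ω,
      u' x t - ∑ i : Fin n, ⟪H x t (EuclideanSpace.single i (1 : ℝ)),
        EuclideanSpace.single i (1 : ℝ)⟫ = ‖G x t‖ ^ p)
    (M : ℝ) (hM : ∀ x ∈ Ω, ∀ t ∈ Icc (T / 2) T, |u' x t| ≤ M)
    (C₀ : ℝ) (hC₀ : ∀ x ∈ Ω, ∀ t ∈ Ico (0 : ℝ) T, ‖G x t‖ ≤ C₀ * ((δ x) ^ (-β) + 1))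
    :
    ∃ K > 0, ∀ x ∈ Ωδ, ∀ t ∈ Ioo (0 : ℝ) T, -K ≤ ⟪G x t, ν x⟫ := by
  rcases Ωδ.eq_empty_or_nonempty with hemp | ⟨x₀, hx₀⟩
  · exact ⟨1, one_pos, fun x hx => by rw [hemp] at hx; exact absurd hx (Set.notMem_empty x)⟩
  have hδe : δ = fun x => infDist x (frontier Ω) := funext hδ
  subst hδe
  have hx₀Ω : x₀ ∈ Ω := by rw [hΩδ] at hx₀; exact hx₀.1
  have hFne : (frontier Ω).Nonempty := ⟨P x₀, (hP x₀ hx₀).1⟩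
  have hMn : 0 ≤ M := (abs_nonneg _).trans (hM x₀ hx₀Ω T ⟨by linarith, le_rfl⟩)
  have hcomp : IsCompact (closure Ω) :=
    Metric.isCompact_of_isClosed_isBounded isClosed_closure hΩb.closure
  have hballs : ∀ b ∈ frontier Ω, ∀ s ∈ Ioo (0:ℝ) δ₀, ball (b + s • ν b) s ⊆ Ω := by
    intro b hb s hs
    obtain ⟨h1, h2⟩ := (hν1 b hb).2 s hs
    exact aux_ball_subset hs.1 h1 (le_of_eq h2.symm)
  obtain ⟨r1, hr1, hext⟩ := aux_ext Ω hΩb hΩc2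
  set r : ℝ := min r1 (δ₀ / 2) with hr
  have hr0 : 0 < r := by positivity
  have hrδ : r < δ₀ := lt_of_le_of_lt (min_le_right _ _) (by linarith)
  have hextν : ∀ b ∈ frontier Ω, ∀ y ∈ Ω, 2 * r * ⟪y - b, -ν b⟫ ≤ ‖y - b‖ ^ 2 := by
    intro b hb y hy
    obtain ⟨e, he, h1⟩ := hext b hb
    have h2 := aux_nu_ext Ω b (ν b) e r1 δ₀ hr1 hδ₀ (hν1 b hb).1 he (hballs b hb) h1
    have h3 := h1 y hy
    rw [h2] at h3
    have h4 : r ≤ r1 := min_le_left _ _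
    rcases le_total ⟪y - b, -ν b⟫ (0:ℝ) with h5 | h5
    · have := mul_nonneg_of_nonpos_of_nonpos (by linarith : -(2 * r) ≤ 0) h5
      nlinarith [sq_nonneg ‖y - b‖]
    · have := mul_le_mul_of_nonneg_right h4 h5
      linarith
  have hlip := aux_nu_lip Ω (frontier Ω) ν r hr0 (fun b hb => (hν1 b hb).1)
    (fun b hb => hballs b hb r ⟨hr0, hrδ⟩) hextν
  obtain ⟨X, hX, hXν⟩ := aux_X (frontier Ω) ν r hr0 isClosed_frontier hlip
  obtain ⟨R0, hR0⟩ := hΩb.closure.subset_closedBall 0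
  have hX1 : ContDiff ℝ 1 (fderiv ℝ X) := hX.fderiv_right (by norm_num)
  have hX2 : Continuous (fderiv ℝ (fderiv ℝ X)) := hX1.continuous_fderiv (by norm_num)
  obtain ⟨D1', hD1'⟩ := (isCompact_closedBall (0 : EuclideanSpace ℝ (Fin n)) R0).exists_bound_of_continuousOn
    (f := fderiv ℝ X) hX1.continuous.continuousOn
  obtain ⟨D2', hD2'⟩ := (isCompact_closedBall (0 : EuclideanSpace ℝ (Fin n)) R0).exists_bound_of_continuousOn
    (f := fderiv ℝ (fderiv ℝ X)) hX2.continuousOn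
  set D1 := |D1'| with hD1d
  set D2 := |D2'| with hD2d
  have hD1 : ∀ x ∈ closedBall (0 : EuclideanSpace ℝ (Fin n)) R0, ‖fderiv ℝ X x‖ ≤ D1 :=
    fun x hx => (hD1' x hx).trans (le_abs_self _)
  have hD2 : ∀ x ∈ closedBall (0 : EuclideanSpace ℝ (Fin n)) R0, ‖fderiv ℝ (fderiv ℝ X) x‖ ≤ D2 :=
    fun x hx => (hD2' x hx).trans (le_abs_self _)
  have hD1n : 0 ≤ D1 := abs_nonneg _
  have hD2n : 0 ≤ D2 := abs_nonneg _
  have hL : ∀ x ∈ closure Ω, ∀ y ∈ closure Ω, ‖X x - X y‖ ≤ D1 * ‖x - y‖ := by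
    intro x hx y hy
    exact (convex_closedBall (0 : EuclideanSpace ℝ (Fin n)) R0).norm_image_sub_le_of_norm_fderiv_le
      (𝕜 := ℝ) (fun z _ => (hX.differentiable (by norm_num)) z) hD1 (hR0 hy) (hR0 hx)
  set s0 : ℝ := δ₀ / 2 with hs0
  set δ1 : ℝ := min (s0 / 8) (1 / (16 * (D1 + 1))) with hδ1d
  have hδ1 : 0 < δ1 := by positivity
  have hδ1a : δ1 ≤ s0 / 8 := min_le_left _ _
  have hδ1b : D1 * δ1 ≤ 1 / 16 := by
    have h1 : δ1 ≤ 1 / (16 * (D1 + 1)) := min_le_right _ _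
    rw [le_div_iff₀ (by positivity)] at h1
    linarith
  have hfoot : ∀ y ∈ closure Ω, infDist y (frontier Ω) < δ₀ → ∃ b ∈ frontier Ω,
      y = b + (infDist y (frontier Ω)) • ν b := by
    intro y hy hyd
    by_cases hyΩ : y ∈ Ω
    · have hyδ : y ∈ Ωδ := by rw [hΩδ]; exact ⟨hyΩ, hyd⟩
      obtain ⟨h1, h2, h3⟩ := hP y hyδ
      obtain ⟨h4, h5⟩ := hν2 y hyδ
      rw [h4] at h5
      refine ⟨P y, h1, aux_foot (frontier Ω) y (P y) (ν (P y)) h1 h2 ?_ (hν1 _ h1).1 h5⟩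
      rw [← isClosed_frontier.notMem_iff_infDist_pos hFne, hΩo.frontier_eq]
      exact fun h => h.2 hyΩ
    · have hyf : y ∈ frontier Ω := by rw [hΩo.frontier_eq]; exact ⟨hy, hyΩ⟩
      exact ⟨y, hyf, by rw [infDist_zero_of_mem hyf, zero_smul, add_zero]⟩
  obtain ⟨K0, hK0, hK0b⟩ := aux_barrier Ω hΩo hΩb r1 M hr1 hext
  have hpβ : 0 < β := by rw [hβ]; apply one_div_pos.2; linarith
  set Cg : ℝ := |C₀| * ((δ1 / 2) ^ (-β) + 1) with hCgd
  have hCg : 0 ≤ Cg := by positivity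
  have hCgb : ∀ x ∈ Ω, δ1 / 2 ≤ infDist x (frontier Ω) → ∀ s ∈ Ico (0:ℝ) T, ‖G x s‖ ≤ Cg := by
    intro x hx hxd s hs
    refine (hC₀ x hx s hs).trans ?_
    have h1 : (infDist x (frontier Ω)) ^ (-β) ≤ (δ1 / 2) ^ (-β) :=
      Real.rpow_le_rpow_of_nonpos (by positivity) hxd (by linarith)
    have h2 : 0 ≤ (infDist x (frontier Ω)) ^ (-β) := Real.rpow_nonneg infDist_nonneg _
    apply mul_le_mul (le_abs_self _) (by linarith) (by linarith) (abs_nonneg _)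
  obtain ⟨K1', hK1'⟩ := (hcomp.prod (isCompact_Icc (a := (0:ℝ)) (b := T / 2))).exists_bound_of_continuousOn
    (hG_cont.mono (Set.prod_mono le_rfl (fun s hs => ⟨hs.1, by linarith [hs.2]⟩)))
  set K1 := |K1'| with hK1d
  have hK1 : 0 ≤ K1 := abs_nonneg _
  have hK1b : ∀ x ∈ Ω, ∀ s ∈ Icc 0 (T / 2), ‖G x s‖ ≤ K1 := fun x hx s hs =>
    (hK1' (x, s) ⟨subset_closure hx, hs⟩).trans (le_abs_self _)
  obtain ⟨U0', hU0'⟩ := (hcomp.prod (isCompact_Icc (a := (0:ℝ)) (b := T))).exists_bound_of_continuousOn hu_cont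
  set U0 := |U0'| with hU0d
  have hU0 : 0 ≤ U0 := abs_nonneg _
  have hU0b : ∀ x ∈ closure Ω, ∀ s ∈ Icc 0 T, |u x s| ≤ U0 := fun x hx s hs =>
    (hU0' (x, s) ⟨hx, hs⟩).trans (le_abs_self _)
  obtain ⟨C, hC⟩ : ∃ C : ℝ, C = n * (D2 + 200 * D1 ^ 2) := ⟨_, rfl⟩
  obtain ⟨B, hB⟩ : ∃ B : ℝ, B = 2 * p * D1 + 3 * D1 + C := ⟨_, rfl⟩
  obtain ⟨A, hA⟩ : ∃ A : ℝ, A = 3 * D1 * M + C + 1 := ⟨_, rfl⟩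
  have hp0 : 0 < p := by linarith
  have hCn : 0 ≤ C := by rw [hC]; positivity
  have hBn : 0 ≤ B := by rw [hB]; positivity
  have hAn : 0 ≤ A := by rw [hA]; positivity
  set h0 : ℝ := min (δ1 / 4) (min (1 / (4 * (D1 + 1))) (1 / (2 * (B + 1)))) with hh0d
  have hh0 : 0 < h0 := by positivity
  have hh0a : h0 ≤ δ1 / 4 := min_le_left _ _
  have hh0b : h0 * (4 * (D1 + 1)) ≤ 1 := by
    rw [← le_div_iff₀ (by positivity)]; exact (min_le_right _ _).trans (min_le_left _ _)
  have hh0c : h0 * (2 * (B + 1)) ≤ 1 := by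
    rw [← le_div_iff₀ (by positivity)]; exact (min_le_right _ _).trans (min_le_right _ _)
  set C' : ℝ := 2 * K0 + 2 * Cg + 2 * K1 + B * U0 with hC'
  set KK : ℝ := C' + B * U0 + A * T with hKK
  have hC'n : 0 ≤ C' := by positivity
  have hKKn : 0 ≤ KK := by positivity
  refine ⟨K1 + Cg + 4 * KK + 1, by positivity, ?_⟩
  intro x hx t ht
  have hxΩ : x ∈ Ω := by rw [hΩδ] at hx; exact hx.1
  have hxδ : infDist x (frontier Ω) < δ₀ := by rw [hΩδ] at hx; exact hx.2
  obtain ⟨hPx1, hPx2, -⟩ := hP x hx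
  have hνx : ν x = ν (P x) := (hν2 x hx).1
  have hνn : ‖ν x‖ = 1 := by rw [hνx]; exact (hν1 _ hPx1).1
  have hab := abs_le.1 (abs_real_inner_le_norm (G x t) (ν x))
  rw [hνn, mul_one] at hab
  rcases le_or_gt t (T / 2) with htT | htT
  · have := hK1b x hxΩ t ⟨ht.1.le, htT⟩
    linarith [hab.1]
  rcases le_or_gt δ1 (infDist x (frontier Ω)) with hxd | hxd
  · have := hCgb x hxΩ (by linarith) t ⟨ht.1.le, ht.2⟩
    linarith [hab.1]
  have hXx : ‖X x - ν x‖ ≤ 1 / 4 := by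
    have h1 := hL x (subset_closure hxΩ) (P x) (frontier_subset_closure hPx1)
    have h2 : ‖x - P x‖ ≤ δ1 := by
      rw [← dist_eq_norm, hPx2]; exact hxd.le
    have h3 := mul_le_mul_of_nonneg_left h2 hD1n
    have h4 := hXν _ hPx1
    have h5 := norm_add_le (X x - X (P x)) (X (P x) - ν (P x))
    rw [hνx]
    rw [sub_add_sub_cancel] at h5
    linarith
  obtain ⟨c, hc, hcn⟩ := aux_c (X x) (ν x) hνn hXx
  have hcurve : HasDerivAt (fun q : ℝ => x + q • (c • ν x)) (c • ν x) 0 := by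
    simpa using ((hasDerivAt_id (0:ℝ)).smul_const (c • ν x)).const_add x
  have hder := aux_grad_curve (U := fun z => u z t) (g := G x t)
    (by simpa using hG2 t ⟨ht.1, ht.2.le⟩ x hxΩ) hcurve
  obtain ⟨ε, hε, hεΩ⟩ := Metric.isOpen_iff.1 hΩo x hxΩ
  have hkey := aux_left (f := fun q => u (x + q • (c • ν x)) t + KK * q)
    (D := ⟪G x t, c • ν x⟫ + KK) (l := -(min (ε / 2) h0)) (s := 0)
    (by have : 0 < min (ε / 2) h0 := by positivity
        linarith)
    ((hder.add ((hasDerivAt_id (0:ℝ)).const_mul KK)).congr_deriv (by simp)) (by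
      intro q hq
      rcases eq_or_lt_of_le hq.2 with hq0 | hq0
      · rw [hq0]
      obtain ⟨h, rfl⟩ : ∃ h, q = -h := ⟨-q, by ring⟩
      have hh : 0 < h := by linarith
      have hh1 : h ≤ min (ε / 2) h0 := by linarith [hq.1]
      have hh2 : h ≤ h0 := hh1.trans (min_le_right _ _)
      have hh3 : h ≤ ε / 2 := hh1.trans (min_le_left _ _)
      have hye : x - h • X x + h • (X x - c • ν x) = x + (-h) • (c • ν x) := by module
      have hyΩ : x + (-h) • (c • ν x) ∈ Ω := by
        apply hεΩ
        rw [mem_ball, dist_eq_norm, add_sub_cancel_left, norm_smul, norm_smul, hνn, norm_neg,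
          Real.norm_of_nonneg hh.le, Real.norm_of_nonneg (by linarith [hc.1])]
        nlinarith [hc.2, hc.1]
      have hhD : h * D1 ≤ 1 / 4 := by nlinarith
      have hhB : h * B ≤ 1 / 2 := by nlinarith
      have hmain := aux_max p hp Ω hΩo hΩb X hX D1 D2
        (fun z hz => hD1 z (hR0 (subset_closure hz))) (fun z hz => hD2 z (hR0 (subset_closure hz)))
        hD1n hD2n T hT u G H u' hu_cont hu_bd hG2 hH hu' hPDE M hMn hM C B A hC hB hA h δ1 hh
        (by linarith) hhD hhB
        (fun z hz hzd ω hω hzy => aux_geo Ω ν X s0 D1 δ1 h hD1n hδ1 hh (by linarith)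
          (by have := mul_le_mul_of_nonneg_left (by linarith : 4 * h ≤ δ1) hD1n
              linarith)
          (fun b hb => (hν1 b hb).1)
          (fun b hb => hballs b hb s0 ⟨by positivity, by linarith⟩)
          (fun y hy hyd => hfoot y hy (by linarith)) hXν hL z ω hz hzd hω hzy)
        K0 Cg K1 U0 hK0 hCg hK1 hU0
        (fun s hs z hz b hb => by
          have hs1 : 0 < s := by linarith [hs.1]
          have hs2 := hs.2
          exact hK0b (fun z => u z s) (fun z => G z s) (fun z => H z s)
            (hu_cont.comp (f := fun z => (z, s)) (by fun_prop)
              (fun z hz => ⟨hz, hs1.le, hs2.le⟩))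
            (fun z hz => hu_bd z hz s ⟨hs1.le, hs2.le⟩) (hG2 s ⟨hs1, hs2.le⟩) (hH s ⟨hs1, hs2.le⟩)
            (fun z hz => by
              have h1 := hPDE s ⟨hs1, hs2.le⟩ z hz
              have h2 := (abs_le.1 (hM z hz s ⟨hs.1, hs2.le⟩)).2
              have h3 : 0 ≤ ‖G z s‖ ^ p := Real.rpow_nonneg (norm_nonneg _) _
              linarith) z hz b hb)
        hCgb (fun z hz => hK1b z hz (T / 2) ⟨by linarith, le_rfl⟩) hU0b t ⟨htT.le, ht.2⟩
        x (subset_closure hxΩ) hxd.le (X x - c • ν x) hcn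
        (by rw [hye]; exact subset_closure hyΩ)
      rw [hye] at hmain
      have hux := (abs_le.1 (hU0b x (subset_closure hxΩ) t ⟨ht.1.le, ht.2.le⟩)).1
      have g1 : h * B * -U0 ≤ h * B * u x t := mul_le_mul_of_nonneg_left hux (by positivity)
      have g2 : h * A * t ≤ h * A * T := mul_le_mul_of_nonneg_left ht.2.le (by positivity)
      simp only [zero_smul, add_zero, mul_zero]
      have g3 : KK * -h = -(h * C') - h * B * U0 - h * A * T := by rw [hKK]; ring
      rw [g3]
      linarith)
  rw [inner_smul_right] at hkey
  rcases le_or_gt 0 (⟪G x t, ν x⟫ : ℝ) with hp1 | hp1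
  · linarith
  · have := mul_le_mul_of_nonpos_right hc.1 hp1.le
    linarith
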